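/- Fourth new modulus-8 A_2 Rogers–Ramanujan identity: the quadruple sum over n_1,n_2,n_3,n_4 ≥ 0 of q^(n_1^2+n_2^2+n_3^2+n_4^2-n_1n_2+n_2n_4)/(q;q)_{n_1} · [n_1 choose n_2]_q [n_1 choose n_4]_q [n_2 choose n_3]_q equals 1/((q,q,q^2,q^4,q^4,q^6,q^7,q^7; q^8)_∞). -/

import Mathlib

/-!
The identity is the limit `N → ∞` of an identity between two finite sums, one fermionic and one
bosonic, for the profile `(2,2,1)` of level `5` in type `A₂`; the limiting bosonic sum is a theta
function that factors.

To each of the seven profiles of level `5`, up to rotation, two sequences in `N` are attached.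

* The fermionic one is `FF g N = ∑ₙ gₙ / (q;q)_{N-n}`, where `gₙ` is the coefficient of `z ^ n` in a
  combination of quadruple sums `∑ z ^ n₁ q ^ (Q(n) + linear) / (q;q)_{n₁} [n₁,n₂][n₁,n₄][n₂,n₃]`.
  For `(2,2,1)` the combination is the sum of the theorem, refined by `z`.
* The bosonic one, `bb`, is an alternating sum over the affine Weyl group of type `A₂` of terms
  `± q ^ E / ((q;q)_{N+s₀} (q;q)_{N+s₁} (q;q)_{N+s₂})` with `s₀ + s₁ + s₂ = 0`.

Both satisfy the same `q`-difference system `Sol` in `N`, with value `1` at `N = 0`. For the bosonic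
sums (`sol_bos`) this is an expansion of the factors that relate `N - 1` to `N`, together with
reflections that make sums outside the seven profiles reduce to those inside. For the fermionic sums
(`sol_ferm`) it amounts to four relations between coefficients of powers of `z`
(`ss_R1`, …, `ss_R4`), all consequences of summation by parts in `n₂`, `n₃`, `n₄` and of the
recurrences of the Gaussian binomials. The solution of the system is unique (`Sol.unique`), because
in Laurent series the difference of two solutions at `N` is `q ^ N` times an integral combination of
its own components. Hence the two sequences agree (`ferm_eq_bos`). Letting `N → ∞` gives
`(q;q)_∞² S = Θ` (`sum_eq`), with `S` the quadruple sum and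
`Θ = ∑ᵤ ± q ^ E(u)` a sum over a planar lattice.

To evaluate `Θ`, put `P(q) = (q;q)_∞ = ∑ (-1)ᵏ q ^ (k (3 k - 1) / 2)`, `φ(q) = ∑ q ^ (a²)`,
`ψ(q) = ∑ q ^ (2 k² - k)` and `f = ∑ (-1)ᵃ q ^ (4 a² - a)`. Then `2 Θ = P(q) φ(q²) + P(-q) φ(-q²)`
(`two_theta`); the Jacobi triple product gives `P(±q) = (q²;q⁴)_∞ ψ(∓q)`; and a rotation of the
lattice gives `ψ(-q) φ(q²) + ψ(q) φ(-q²) = 2 f²` (`rotate`). So `Θ = (q²;q⁴)_∞ f²` (`bs_prod`). By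
the triple product for `f`, the quotient `(q;q)_∞² / ((q²;q⁴)_∞ f²)` is the product over residues
modulo `8` in the statement (`dd_mul`).
-/

open scoped Finset

noncomputable instance : TopologicalSpace (PowerSeries ℚ) :=
  Pi.topologicalSpace (ι := Unit →₀ ℕ) (Y := fun _ => ℚ)

/-- The formal variable `q`. -/
noncomputable def q : PowerSeries ℚ := PowerSeries.X

/-- The q-Pochhammer symbol `(q;q)_n = ∏_{k=0}^{n-1} (1 - q·q^k)`. -/
noncomputable def qPoch (n : ℕ) : PowerSeries ℚ :=
  ∏ k ∈ Finset.range n, (1 - q ^ (k + 1))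

/-- The Gaussian binomial coefficient `[m choose k]_q`, zero unless `k ≤ m`. -/
noncomputable def qBinom (m k : ℕ) : PowerSeries ℚ :=
  if k ≤ m then qPoch m * (qPoch k * qPoch (m - k))⁻¹ else 0

namespace A2Mod8

/-! ### Finite products and the inner triple sum -/

section field

variable {K : Type*} [Field K] {q : K}

/-- The finite product `(q;q)_m` for an integer `m`, with value `0` for `m < 0`. -/
def pf (q : K) (m : ℤ) : K :=
  if 0 ≤ m then ∏ k ∈ Finset.range m.toNat, (1 - q ^ (k + 1)) else 0

theorem pf_neg {m : ℤ} (h : m < 0) : pf q m = 0 := by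
  simp [pf, not_le.mpr h]

theorem pf_zero : pf q 0 = 1 := by simp [pf]

theorem pf_succ {m : ℤ} (h : 0 ≤ m) : pf q (m + 1) = pf q m * (1 - q ^ (m + 1)) := by
  lift m to ℕ using h
  have h1 : (0 : ℤ) ≤ (m : ℤ) + 1 := by positivity
  have h2 : ((m : ℤ) + 1).toNat = m + 1 := by omega
  simp only [pf, h1, if_true, h2, Int.natCast_nonneg, Int.toNat_natCast, Finset.prod_range_succ]
  rw [← zpow_natCast q (m + 1)]
  push_cast
  rfl

theorem pf_ne (hq : ∀ n : ℕ, 0 < n → q ^ n ≠ 1) {m : ℤ} (h : 0 ≤ m) : pf q m ≠ 0 := by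
  simp only [pf, h, if_true]
  refine Finset.prod_ne_zero_iff.mpr fun k _ => ?_
  exact sub_ne_zero.mpr (hq _ k.succ_pos).symm

theorem zpow_ne_one (hq : ∀ n : ℕ, 0 < n → q ^ n ≠ 1) {m : ℤ} (h : 0 < m) : q ^ m ≠ 1 := by
  lift m to ℕ using h.le
  rw [zpow_natCast]
  exact hq m (by omega)

/-- `1 / (q;q)_m`, which is `0` for `m < 0`. -/
def ip (q : K) (m : ℤ) : K := (pf q m)⁻¹

theorem ip_neg {m : ℤ} (h : m < 0) : ip q m = 0 := by simp [ip, pf_neg h]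

theorem ip_ne_zero_imp {m : ℤ} (h : ip q m ≠ 0) : 0 ≤ m := by
  by_contra h2; exact h (ip_neg (not_le.mp h2))

theorem ip_zero : ip q 0 = 1 := by simp [ip, pf_zero]

/-- The convention `1 / (q;q)_m = 0` for `m < 0` makes this recurrence valid for all integers,
which is what removes boundary terms from every summation by parts below. -/
theorem ip_step (hq : ∀ n : ℕ, 0 < n → q ^ n ≠ 1) (m : ℤ) :
    ip q (m - 1) = ip q m * (1 - q ^ m) := by
  rcases lt_trichotomy m 0 with h | h | h
  · rw [ip_neg h, ip_neg (by omega), zero_mul]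
  · subst h; rw [ip_neg (by omega)]; simp
  · have := pf_succ (q := q) (m := m - 1) (by omega)
    rw [sub_add_cancel] at this
    have h1 : (1 : K) - q ^ m ≠ 0 := sub_ne_zero.mpr (zpow_ne_one hq h).symm
    rw [ip, ip, this, mul_inv, mul_assoc, inv_mul_cancel₀ h1, mul_one]

/-- The summand of `vv`, for the summation indices `n = (n₂, n₃, n₄)`. -/
def su (q : K) (a b r₂ r₃ r₄ : ℤ) (n : ℤ × ℤ × ℤ) : K :=
  q ^ (n.1 ^ 2 + n.2.1 ^ 2 + n.2.2 ^ 2 + n.1 * n.2.2 + r₂ * n.1 + r₃ * n.2.1 + r₄ * n.2.2) *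
    (ip q (a - n.1) * ip q (n.1 - n.2.1) * ip q n.2.1 * ip q (b - n.2.2) * ip q n.2.2)

/-- The inner triple sum over `n₂, n₃, n₄`, with the tops `a`, `b` of the two binomials
`[n₁ choose n₂]`, `[n₁ choose n₄]` decoupled and with a linear form in the exponent; the factors
`(q;q)_a`, `(q;q)_b` are left out. -/
noncomputable def vv (q : K) (a b r₂ r₃ r₄ : ℤ) : K := ∑ᶠ n, su q a b r₂ r₃ r₄ n

theorem su_support (a b r₂ r₃ r₄ : ℤ) :
    Function.support (su q a b r₂ r₃ r₄) ⊆ ↑(Finset.Icc ((0, 0, 0) : ℤ × ℤ × ℤ) (a, a, b)) := by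
  intro n hn
  simp only [Function.mem_support, su, ne_eq, mul_eq_zero, not_or] at hn
  obtain ⟨-, ⟨⟨⟨h1, h2⟩, h3⟩, h4⟩, h5⟩ := hn
  have h1 := ip_ne_zero_imp h1
  have h2 := ip_ne_zero_imp h2
  have h3 := ip_ne_zero_imp h3
  have h4 := ip_ne_zero_imp h4
  have h5 := ip_ne_zero_imp h5
  simp only [Finset.coe_Icc, Set.mem_Icc, Prod.le_def]
  omega

theorem su_fin (a b r₂ r₃ r₄ : ℤ) : Function.HasFiniteSupport (su q a b r₂ r₃ r₄) :=
  (Finset.finite_toSet _).subset (su_support a b r₂ r₃ r₄)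

theorem vv_neg_left {a : ℤ} (h : a < 0) (b r₂ r₃ r₄ : ℤ) : vv q a b r₂ r₃ r₄ = 0 := by
  rw [vv, finsum_eq_sum_of_support_subset _ (su_support a b r₂ r₃ r₄), Finset.Icc_eq_empty,
    Finset.sum_empty]
  simp only [Prod.le_def]; simp; omega

theorem vv_neg_right {b : ℤ} (h : b < 0) (a r₂ r₃ r₄ : ℤ) : vv q a b r₂ r₃ r₄ = 0 := by
  rw [vv, finsum_eq_sum_of_support_subset _ (su_support a b r₂ r₃ r₄), Finset.Icc_eq_empty,
    Finset.sum_empty]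
  simp only [Prod.le_def]; simp; omega

theorem vv_zero (r₂ r₃ r₄ : ℤ) : vv q 0 0 r₂ r₃ r₄ = 1 := by
  rw [vv, finsum_eq_sum_of_support_subset _ (su_support 0 0 r₂ r₃ r₄),
    show ((0, 0, 0) : ℤ × ℤ × ℤ) = 0 from rfl, Finset.Icc_self, Finset.sum_singleton]
  simp [su, ip_zero]

/-- Summation principle: a pointwise relation between the summands, up to shifting the summation
indices by `d` in one of two terms, gives the same relation between the sums. -/
theorem vv_shift (d : ℤ × ℤ × ℤ) {a b r₂ r₃ r₄ a' b' s₂ s₃ s₄ : ℤ} (c : K)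
    {f g : ℤ × ℤ × ℤ → K}
    (hf : ∀ n, f n = su q a b r₂ r₃ r₄ n - su q a' b' s₂ s₃ s₄ n)
    (h : ∀ n, f (n + d) = c * g n) :
    vv q a b r₂ r₃ r₄ - vv q a' b' s₂ s₃ s₄ = c * ∑ᶠ n, g n := by
  rw [vv, vv, ← finsum_sub_distrib (su_fin ..) (su_fin ..), mul_finsum]
  rw [← finsum_comp_equiv (Equiv.addRight d)]
  refine finsum_congr fun n => ?_
  rw [← h, hf]
  rfl

theorem finsum_sub_su (a b r₂ r₃ r₄ a' b' s₂ s₃ s₄ : ℤ) (c : K) :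
    ∑ᶠ n, (su q a b r₂ r₃ r₄ n - c * su q a' b' s₂ s₃ s₄ n) =
      vv q a b r₂ r₃ r₄ - c * vv q a' b' s₂ s₃ s₄ := by
  have h : Function.HasFiniteSupport fun n => c * su q a' b' s₂ s₃ s₄ n :=
    Set.Finite.subset (su_fin (q := q) a' b' s₂ s₃ s₄) fun n hn => right_ne_zero_of_mul hn
  rw [finsum_sub_distrib (su_fin ..) h, ← mul_finsum, vv, vv]

variable (h0 : q ≠ 0) (hq : ∀ n : ℕ, 0 < n → q ^ n ≠ 1)
include h0 hq

/-- Lowering the top `a` of the binomial `[a choose n₂]`. -/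
theorem vv_Ea (a b r₂ r₃ r₄ : ℤ) :
    vv q (a - 1) b r₂ r₃ r₄ = vv q a b r₂ r₃ r₄ - q ^ a * vv q a b (r₂ - 1) r₃ r₄ := by
  rw [← finsum_sub_su, vv]
  refine finsum_congr fun ⟨m, k, l⟩ => ?_
  have h1 := ip_step hq (a - m)
  rw [show a - m - 1 = a - 1 - m by ring] at h1
  simp only [su]
  rw [h1]
  have e : q ^ (m ^ 2 + k ^ 2 + l ^ 2 + m * l + r₂ * m + r₃ * k + r₄ * l) * q ^ (a - m) =
    q ^ a * q ^ (m ^ 2 + k ^ 2 + l ^ 2 + m * l + (r₂ - 1) * m + r₃ * k + r₄ * l) := by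
    rw [← zpow_add₀ h0, ← zpow_add₀ h0]; ring_nf
  linear_combination (-(ip q (a - m) * ip q (m - k) * ip q k * ip q (b - l) * ip q l)) * e

/-- Lowering the top `b` of the binomial `[b choose n₄]`. -/
theorem vv_Eb (a b r₂ r₃ r₄ : ℤ) :
    vv q a (b - 1) r₂ r₃ r₄ = vv q a b r₂ r₃ r₄ - q ^ b * vv q a b r₂ r₃ (r₄ - 1) := by
  rw [← finsum_sub_su, vv]
  refine finsum_congr fun ⟨m, k, l⟩ => ?_
  have h1 := ip_step hq (b - l)
  rw [show b - l - 1 = b - 1 - l by ring] at h1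
  simp only [su]
  rw [h1]
  have e : q ^ (m ^ 2 + k ^ 2 + l ^ 2 + m * l + r₂ * m + r₃ * k + r₄ * l) * q ^ (b - l) =
    q ^ b * q ^ (m ^ 2 + k ^ 2 + l ^ 2 + m * l + r₂ * m + r₃ * k + (r₄ - 1) * l) := by
    rw [← zpow_add₀ h0, ← zpow_add₀ h0]; ring_nf
  linear_combination (-(ip q (a - m) * ip q (m - k) * ip q k * ip q (b - l) * ip q l)) * e

/-- Summation by parts in `n₄`. -/
theorem vv_D4 (a b r₂ r₃ r₄ : ℤ) :
    vv q a b r₂ r₃ r₄ - vv q a b r₂ r₃ (r₄ + 1) = q ^ (1 + r₄) *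
      (vv q a b (r₂ + 1) r₃ (r₄ + 2) - q ^ b * vv q a b (r₂ + 1) r₃ (r₄ + 1)) := by
  rw [← finsum_sub_su]
  refine vv_shift (0, 0, 1) _ (fun n => rfl) fun ⟨m, k, l⟩ => ?_
  have h1 := ip_step hq (l + 1)
  have h2 := ip_step hq (b - l)
  rw [show l + 1 - 1 = l by ring] at h1
  rw [show b - l - 1 = b - (l + 1) by ring] at h2
  simp only [su, Prod.mk_add_mk, add_zero]
  set W := m ^ 2 + k ^ 2 + l ^ 2 + m * l + r₂ * m + r₃ * k + r₄ * l with hW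
  rw [h1, h2,
    show m ^ 2 + k ^ 2 + (l + 1) ^ 2 + m * (l + 1) + r₂ * m + r₃ * k + r₄ * (l + 1) =
      W + m + 2 * l + (1 + r₄) by rw [hW]; ring,
    show m ^ 2 + k ^ 2 + (l + 1) ^ 2 + m * (l + 1) + r₂ * m + r₃ * k + (r₄ + 1) * (l + 1) =
      W + m + 2 * l + (1 + r₄) + (l + 1) by rw [hW]; ring,
    show m ^ 2 + k ^ 2 + l ^ 2 + m * l + (r₂ + 1) * m + r₃ * k + (r₄ + 2) * l =
      W + m + 2 * l by rw [hW]; ring,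
    show m ^ 2 + k ^ 2 + l ^ 2 + m * l + (r₂ + 1) * m + r₃ * k + (r₄ + 1) * l =
      W + m + 2 * l - l by rw [hW]; ring,
    zpow_sub₀ h0 b l, zpow_sub₀ h0 _ l, zpow_add₀ h0 _ (l + 1), zpow_add₀ h0 _ (1 + r₄)]
  ring

/-- Summation by parts in `n₃`. -/
theorem vv_D3 (a b r₂ r₃ r₄ : ℤ) :
    vv q a b r₂ r₃ r₄ - vv q a b r₂ (r₃ + 1) r₄ = q ^ (1 + r₃) *
      (vv q a b r₂ (r₃ + 2) r₄ - vv q a b (r₂ + 1) (r₃ + 1) r₄) := by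
  have := finsum_sub_su (q := q) a b r₂ (r₃ + 2) r₄ a b (r₂ + 1) (r₃ + 1) r₄ 1
  rw [one_mul] at this
  rw [← this]
  refine vv_shift (0, 1, 0) _ (fun n => rfl) fun ⟨m, k, l⟩ => ?_
  have h1 := ip_step hq (k + 1)
  have h2 := ip_step hq (m - k)
  rw [show k + 1 - 1 = k by ring] at h1
  rw [show m - k - 1 = m - (k + 1) by ring] at h2
  simp only [su, Prod.mk_add_mk, add_zero]
  set W := m ^ 2 + k ^ 2 + l ^ 2 + m * l + r₂ * m + r₃ * k + r₄ * l with hW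
  rw [h1, h2,
    show m ^ 2 + (k + 1) ^ 2 + l ^ 2 + m * l + r₂ * m + r₃ * (k + 1) + r₄ * l =
      W + 2 * k + (1 + r₃) by rw [hW]; ring,
    show m ^ 2 + (k + 1) ^ 2 + l ^ 2 + m * l + r₂ * m + (r₃ + 1) * (k + 1) + r₄ * l =
      W + 2 * k + (1 + r₃) + (k + 1) by rw [hW]; ring,
    show m ^ 2 + k ^ 2 + l ^ 2 + m * l + r₂ * m + (r₃ + 2) * k + r₄ * l =
      W + 2 * k by rw [hW]; ring,
    show m ^ 2 + k ^ 2 + l ^ 2 + m * l + (r₂ + 1) * m + (r₃ + 1) * k + r₄ * l =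
      W + 2 * k + (m - k) by rw [hW]; ring,
    zpow_add₀ h0 _ (m - k), zpow_add₀ h0 _ (k + 1), zpow_add₀ h0 _ (1 + r₃)]
  ring

/-- Summation by parts in `n₂`. -/
theorem vv_D2 (a b r₂ r₃ r₄ : ℤ) :
    vv q a b r₂ r₃ r₄ - vv q a b (r₂ + 1) (r₃ - 1) r₄ = q ^ (1 + r₂) *
      (vv q a b (r₂ + 2) r₃ (r₄ + 1) - q ^ a * vv q a b (r₂ + 1) r₃ (r₄ + 1)) := by
  rw [← finsum_sub_su]
  refine vv_shift (1, 0, 0) _ (fun n => rfl) fun ⟨m, k, l⟩ => ?_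
  have h1 := ip_step hq (m + 1 - k)
  have h2 := ip_step hq (a - m)
  rw [show m + 1 - k - 1 = m - k by ring] at h1
  rw [show a - m - 1 = a - (m + 1) by ring] at h2
  simp only [su, Prod.mk_add_mk, add_zero]
  set W := m ^ 2 + k ^ 2 + l ^ 2 + m * l + r₂ * m + r₃ * k + r₄ * l with hW
  rw [h1, h2,
    show (m + 1) ^ 2 + k ^ 2 + l ^ 2 + (m + 1) * l + r₂ * (m + 1) + r₃ * k + r₄ * l =
      W + 2 * m + l + (1 + r₂) by rw [hW]; ring,
    show (m + 1) ^ 2 + k ^ 2 + l ^ 2 + (m + 1) * l + (r₂ + 1) * (m + 1) + (r₃ - 1) * k + r₄ * l =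
      W + 2 * m + l + (1 + r₂) + (m + 1 - k) by rw [hW]; ring,
    show m ^ 2 + k ^ 2 + l ^ 2 + m * l + (r₂ + 2) * m + r₃ * k + (r₄ + 1) * l =
      W + 2 * m + l by rw [hW]; ring,
    show m ^ 2 + k ^ 2 + l ^ 2 + m * l + (r₂ + 1) * m + r₃ * k + (r₄ + 1) * l =
      W + 2 * m + l - m by rw [hW]; ring,
    zpow_sub₀ h0 a m, zpow_sub₀ h0 _ m, zpow_add₀ h0 _ (m + 1 - k), zpow_add₀ h0 _ (1 + r₂)]
  ring

end field

/-! ### Sums with raised tops -/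

section field

variable {K : Type*} [Field K] {q : K}

section

variable (h0 : q ≠ 0) (hq : ∀ n : ℕ, 0 < n → q ^ n ≠ 1)
include h0 hq

/-- Raising the top `b`, from summation by parts in `n₄`; `vv_P4b` is a second form. -/
theorem vv_P4a (a b r₂ r₃ r₄ : ℤ) :
    (1 - q ^ (b + 1)) * vv q a (b + 1) r₂ r₃ r₄ = vv q a b r₂ r₃ (r₄ + 1) +
      q ^ (1 + r₄) * vv q a b (r₂ + 1) r₃ (r₄ + 2) := by
  have e1 := vv_Eb h0 hq a (b + 1) r₂ r₃ (r₄ + 1)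
  have e2 := vv_Eb h0 hq a (b + 1) (r₂ + 1) r₃ (r₄ + 2)
  have d := vv_D4 h0 hq a (b + 1) r₂ r₃ r₄
  simp only [add_sub_cancel_right, show r₄ + 2 - 1 = r₄ + 1 by ring] at e1 e2
  linear_combination d - e1 - q ^ (1 + r₄) * e2

theorem vv_P4b (a b r₂ r₃ r₄ : ℤ) :
    (1 - q ^ (b + 1)) * vv q a (b + 1) r₂ r₃ r₄ = vv q a b r₂ r₃ r₄ +
      q ^ (1 + r₄) * q ^ b * vv q a b (r₂ + 1) r₃ (r₄ + 1) := by
  have e1 := vv_Eb h0 hq a (b + 1) r₂ r₃ r₄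
  have e2 := vv_Eb h0 hq a (b + 1) (r₂ + 1) r₃ (r₄ + 1)
  have d := vv_D4 h0 hq a (b + 1) r₂ r₃ (r₄ - 1)
  simp only [add_sub_cancel_right, show r₄ - 1 + 1 = r₄ by ring,
    show r₄ - 1 + 2 = r₄ + 1 by ring, show 1 + (r₄ - 1) = r₄ by ring] at e1 e2 d
  rw [zpow_add₀ h0, zpow_one] at *
  rw [zpow_add₀ h0 1, zpow_one]
  linear_combination q * q ^ b * d - e1 - q * q ^ r₄ * q ^ b * e2

/-- Raising the top `a`, from summation by parts in `n₂` and `n₃`; `vv_P2b` is a second form. -/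
theorem vv_P2a (a b r₂ r₃ r₄ : ℤ) :
    (1 - q ^ (a + 1)) * vv q (a + 1) b r₂ r₃ r₄ = vv q a b (r₂ + 1) r₃ r₄ +
      q ^ (1 + r₂) * (vv q a b (r₂ + 2) (r₃ + 1) (r₄ + 1) +
        q ^ (1 + r₃) * vv q a b (r₂ + 2) (r₃ + 2) (r₄ + 1)) := by
  have e1 := vv_Ea h0 hq (a + 1) b (r₂ + 1) r₃ r₄
  have e2 := vv_Ea h0 hq (a + 1) b (r₂ + 2) (r₃ + 1) (r₄ + 1)
  have e3 := vv_Ea h0 hq (a + 1) b (r₂ + 2) (r₃ + 2) (r₄ + 1)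
  have d1 := vv_D2 h0 hq (a + 1) b r₂ (r₃ + 1) r₄
  have d2 := vv_D2 h0 hq (a + 1) b r₂ (r₃ + 2) r₄
  have d3 := vv_D3 h0 hq (a + 1) b r₂ r₃ r₄
  simp only [add_sub_cancel_right, show r₂ + 2 - 1 = r₂ + 1 by ring,
    show r₃ + 2 - 1 = r₃ + 1 by ring] at e1 e2 e3 d1 d2 d3
  linear_combination d3 + d1 + q ^ (1 + r₃) * d2 - e1 -
    q ^ (1 + r₂) * (e2 + q ^ (1 + r₃) * e3)

theorem vv_P2b (a b r₂ r₃ r₄ : ℤ) :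
    (1 - q ^ (a + 1)) * vv q (a + 1) b r₂ r₃ r₄ = vv q a b r₂ r₃ r₄ +
      q ^ a * q ^ (1 + r₂) * (vv q a b (r₂ + 1) r₃ (r₄ + 1) +
        q ^ (1 + r₃) * vv q a b (r₂ + 2) (r₃ + 1) (r₄ + 1)) := by
  have e1 := vv_Ea h0 hq (a + 1) b r₂ r₃ r₄
  have e2 := vv_Ea h0 hq (a + 1) b (r₂ + 1) r₃ (r₄ + 1)
  have e3 := vv_Ea h0 hq (a + 1) b (r₂ + 2) (r₃ + 1) (r₄ + 1)
  have d1 := vv_D2 h0 hq (a + 1) b (r₂ - 1) r₃ r₄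
  have d2 := vv_D2 h0 hq (a + 1) b r₂ (r₃ + 1) r₄
  have d3 := vv_D3 h0 hq (a + 1) b r₂ (r₃ - 1) r₄
  simp only [add_sub_cancel_right, sub_add_cancel, show r₂ + 2 - 1 = r₂ + 1 by ring,
    show r₂ - 1 + 2 = r₂ + 1 by ring, show r₃ - 1 + 2 = r₃ + 1 by ring,
    show 1 + (r₂ - 1) = r₂ by ring, show 1 + (r₃ - 1) = r₃ by ring] at e1 e2 e3 d1 d2 d3
  simp only [zpow_add₀ h0, zpow_one] at *
  linear_combination q * q ^ a * (d1 + d3 + q ^ r₃ * d2) - e1 -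
    q ^ a * q * q ^ r₂ * (e2 + q * q ^ r₃ * e3)

end

/-- This also holds at `a = -1`, where `(q;q)_a` breaks its recurrence but the sum vanishes. -/
theorem pf_mul_vv_left (a b r₂ r₃ r₄ : ℤ) :
    pf q (a + 1) * vv q a b r₂ r₃ r₄ = (1 - q ^ (a + 1)) * (pf q a * vv q a b r₂ r₃ r₄) := by
  by_cases h : a < 0
  · rw [vv_neg_left h]; ring
  · rw [pf_succ (not_lt.mp h)]; ring

theorem pf_mul_vv_right (a b r₂ r₃ r₄ : ℤ) :
    pf q (b + 1) * vv q a b r₂ r₃ r₄ = (1 - q ^ (b + 1)) * (pf q b * vv q a b r₂ r₃ r₄) := by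
  by_cases h : b < 0
  · rw [vv_neg_right h]; ring
  · rw [pf_succ (not_lt.mp h)]; ring

/-- The triple sum `∑ q^(…) [a choose n₂][b choose n₄][n₂ choose n₃]` at the tops
`a = n - 2 + i`, `b = n - 2 + j`; the shift of `r₂` by `-n` supplies the cross term `-n₁ n₂`. -/
noncomputable def ww (q : K) (n i j r₂ r₃ r₄ : ℤ) : K :=
  pf q (n - 2 + i) * pf q (n - 2 + j) * vv q (n - 2 + i) (n - 2 + j) (r₂ - n) r₃ r₄

section

variable (h0 : q ≠ 0) (hq : ∀ n : ℕ, 0 < n → q ^ n ≠ 1) {n : ℤ} {y : K} (hy : y = q ^ (n - 2))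
include h0 hq hy

theorem ww_D4 (i j r₂ r₃ r₄ : ℤ) :
    ww q n i j r₂ r₃ r₄ - ww q n i j r₂ r₃ (r₄ + 1) = q ^ (1 + r₄) *
      (ww q n i j (r₂ + 1) r₃ (r₄ + 2) - q ^ j * y * ww q n i j (r₂ + 1) r₃ (r₄ + 1)) := by
  have h := vv_D4 h0 hq (n - 2 + i) (n - 2 + j) (r₂ - n) r₃ r₄
  rw [zpow_add₀ h0 (n - 2), ← hy, show r₂ - n + 1 = r₂ + 1 - n by ring] at h
  simp only [ww]
  linear_combination pf q (n - 2 + i) * pf q (n - 2 + j) * h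

theorem ww_D3 (i j r₂ r₃ r₄ : ℤ) :
    ww q n i j r₂ r₃ r₄ - ww q n i j r₂ (r₃ + 1) r₄ = q ^ (1 + r₃) *
      (ww q n i j r₂ (r₃ + 2) r₄ - ww q n i j (r₂ + 1) (r₃ + 1) r₄) := by
  have h := vv_D3 h0 hq (n - 2 + i) (n - 2 + j) (r₂ - n) r₃ r₄
  rw [show r₂ - n + 1 = r₂ + 1 - n by ring] at h
  simp only [ww]
  linear_combination pf q (n - 2 + i) * pf q (n - 2 + j) * h

theorem ww_D2 (i j r₂ r₃ r₄ : ℤ) :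
    q * y * (ww q n i j r₂ r₃ r₄ - ww q n i j (r₂ + 1) (r₃ - 1) r₄) = q ^ r₂ *
      (ww q n i j (r₂ + 2) r₃ (r₄ + 1) - q ^ i * y * ww q n i j (r₂ + 1) r₃ (r₄ + 1)) := by
  have h := vv_D2 h0 hq (n - 2 + i) (n - 2 + j) (r₂ - n) r₃ r₄
  have e : q * y * q ^ (1 + (r₂ - n)) = q ^ r₂ := by
    rw [hy, ← zpow_one_add₀ h0, ← zpow_add₀ h0]; ring_nf
  rw [zpow_add₀ h0 (n - 2), ← hy, show r₂ - n + 1 = r₂ + 1 - n by ring,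
    show r₂ - n + 2 = r₂ + 2 - n by ring] at h
  simp only [ww]
  rw [← e]
  linear_combination pf q (n - 2 + i) * pf q (n - 2 + j) * q * y * h

theorem ww_Ea (i j r₂ r₃ r₄ : ℤ) :
    (1 - q ^ i * y) * ww q n (i - 1) j r₂ r₃ r₄ =
      ww q n i j r₂ r₃ r₄ - q ^ i * y * ww q n i j (r₂ - 1) r₃ r₄ := by
  have h := vv_Ea h0 hq (n - 2 + i) (n - 2 + j) (r₂ - n) r₃ r₄
  have h2 := pf_mul_vv_left (q := q) (n - 2 + (i - 1)) (n - 2 + j) (r₂ - n) r₃ r₄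
  rw [show n - 2 + (i - 1) + 1 = n - 2 + i by ring] at h2
  rw [show n - 2 + i - 1 = n - 2 + (i - 1) by ring,
    show r₂ - n - 1 = r₂ - 1 - n by ring] at h
  rw [zpow_add₀ h0 (n - 2), ← hy] at h h2
  simp only [ww]
  linear_combination pf q (n - 2 + j) * (pf q (n - 2 + i) * h - h2)

theorem ww_Eb (i j r₂ r₃ r₄ : ℤ) :
    (1 - q ^ j * y) * ww q n i (j - 1) r₂ r₃ r₄ =
      ww q n i j r₂ r₃ r₄ - q ^ j * y * ww q n i j r₂ r₃ (r₄ - 1) := by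
  have h := vv_Eb h0 hq (n - 2 + i) (n - 2 + j) (r₂ - n) r₃ r₄
  have h2 := pf_mul_vv_right (q := q) (n - 2 + i) (n - 2 + (j - 1)) (r₂ - n) r₃ r₄
  rw [show n - 2 + (j - 1) + 1 = n - 2 + j by ring] at h2
  rw [show n - 2 + j - 1 = n - 2 + (j - 1) by ring] at h
  rw [zpow_add₀ h0 (n - 2), ← hy] at h h2
  simp only [ww]
  linear_combination pf q (n - 2 + i) * (pf q (n - 2 + j) * h - h2)

theorem ww_P4a (i j r₂ r₃ r₄ : ℤ) :
    (1 - q ^ (j + 1) * y) * ww q n i (j + 1) r₂ r₃ r₄ =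
      (1 - q ^ (j + 1) * y) * (ww q n i j r₂ r₃ (r₄ + 1) +
        q ^ (1 + r₄) * ww q n i j (r₂ + 1) r₃ (r₄ + 2)) := by
  have h := vv_P4a h0 hq (n - 2 + i) (n - 2 + j) (r₂ - n) r₃ r₄
  have h2 := pf_mul_vv_right (q := q) (n - 2 + i) (n - 2 + j) (r₂ - n) r₃ (r₄ + 1)
  have h3 := pf_mul_vv_right (q := q) (n - 2 + i) (n - 2 + j) (r₂ - n + 1) r₃ (r₄ + 2)
  rw [add_assoc] at h h2 h3
  rw [zpow_add₀ h0 (n - 2), ← hy] at h h2 h3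
  rw [show r₂ - n + 1 = r₂ + 1 - n by ring] at h h3
  simp only [ww]
  linear_combination pf q (n - 2 + i) *
    (pf q (n - 2 + (j + 1)) * h + h2 + q ^ (1 + r₄) * h3)

theorem ww_P4b (i j r₂ r₃ r₄ : ℤ) :
    (1 - q ^ (j + 1) * y) * ww q n i (j + 1) r₂ r₃ r₄ =
      (1 - q ^ (j + 1) * y) * (ww q n i j r₂ r₃ r₄ +
        q ^ (1 + r₄) * (q ^ j * y) * ww q n i j (r₂ + 1) r₃ (r₄ + 1)) := by
  have h := vv_P4b h0 hq (n - 2 + i) (n - 2 + j) (r₂ - n) r₃ r₄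
  have h2 := pf_mul_vv_right (q := q) (n - 2 + i) (n - 2 + j) (r₂ - n) r₃ r₄
  have h3 := pf_mul_vv_right (q := q) (n - 2 + i) (n - 2 + j) (r₂ - n + 1) r₃ (r₄ + 1)
  rw [add_assoc] at h h2 h3
  rw [zpow_add₀ h0 (n - 2), ← hy] at h h2 h3
  rw [zpow_add₀ h0 (n - 2) j, ← hy] at h
  rw [show r₂ - n + 1 = r₂ + 1 - n by ring] at h h3
  simp only [ww]
  linear_combination pf q (n - 2 + i) *
    (pf q (n - 2 + (j + 1)) * h + h2 + q ^ (1 + r₄) * (q ^ j * y) * h3)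

theorem ww_P2a (i j r₂ r₃ r₄ : ℤ) :
    q * y * (1 - q ^ (i + 1) * y) * ww q n (i + 1) j r₂ r₃ r₄ =
      (1 - q ^ (i + 1) * y) * (q * y * ww q n i j (r₂ + 1) r₃ r₄ +
        q ^ r₂ * (ww q n i j (r₂ + 2) (r₃ + 1) (r₄ + 1) +
          q ^ (1 + r₃) * ww q n i j (r₂ + 2) (r₃ + 2) (r₄ + 1))) := by
  have h := vv_P2a h0 hq (n - 2 + i) (n - 2 + j) (r₂ - n) r₃ r₄
  have h2 := pf_mul_vv_left (q := q) (n - 2 + i) (n - 2 + j) (r₂ - n + 1) r₃ r₄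
  have h3 := pf_mul_vv_left (q := q) (n - 2 + i) (n - 2 + j) (r₂ - n + 2) (r₃ + 1) (r₄ + 1)
  have h4 := pf_mul_vv_left (q := q) (n - 2 + i) (n - 2 + j) (r₂ - n + 2) (r₃ + 2) (r₄ + 1)
  have e : q * y * q ^ (1 + (r₂ - n)) = q ^ r₂ := by
    rw [hy, ← zpow_one_add₀ h0, ← zpow_add₀ h0]; ring_nf
  rw [add_assoc] at h h2 h3 h4
  rw [zpow_add₀ h0 (n - 2), ← hy] at h h2 h3 h4
  simp only [sub_add_eq_add_sub] at h h2 h3 h4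
  simp only [sub_add_eq_add_sub, ww]
  rw [← e]
  linear_combination pf q (n + j - 2) * q * y * (pf q (n + (i + 1) - 2) * h + h2 +
    q ^ (1 + (r₂ - n)) * (h3 + q ^ (1 + r₃) * h4))

theorem ww_P2b (i j r₂ r₃ r₄ : ℤ) :
    q * y * (1 - q ^ (i + 1) * y) * ww q n (i + 1) j r₂ r₃ r₄ =
      (1 - q ^ (i + 1) * y) * (q * y * ww q n i j r₂ r₃ r₄ +
        q ^ r₂ * (q ^ i * y) * (ww q n i j (r₂ + 1) r₃ (r₄ + 1) +
          q ^ (1 + r₃) * ww q n i j (r₂ + 2) (r₃ + 1) (r₄ + 1))) := by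
  have h := vv_P2b h0 hq (n - 2 + i) (n - 2 + j) (r₂ - n) r₃ r₄
  have h2 := pf_mul_vv_left (q := q) (n - 2 + i) (n - 2 + j) (r₂ - n) r₃ r₄
  have h3 := pf_mul_vv_left (q := q) (n - 2 + i) (n - 2 + j) (r₂ - n + 1) r₃ (r₄ + 1)
  have h4 := pf_mul_vv_left (q := q) (n - 2 + i) (n - 2 + j) (r₂ - n + 2) (r₃ + 1) (r₄ + 1)
  have e : q * y * q ^ (1 + (r₂ - n)) = q ^ r₂ := by
    rw [hy, ← zpow_one_add₀ h0, ← zpow_add₀ h0]; ring_nf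
  rw [add_assoc] at h h2 h3 h4
  rw [zpow_add₀ h0 (n - 2), ← hy] at h h2 h3 h4
  rw [zpow_add₀ h0 (n - 2) i, ← hy] at h
  simp only [sub_add_eq_add_sub] at h h2 h3 h4
  simp only [sub_add_eq_add_sub, ww]
  rw [← e]
  linear_combination pf q (n + j - 2) * q * y * (pf q (n + (i + 1) - 2) * h + h2 +
    (q ^ i * y) * q ^ (1 + (r₂ - n)) * (h3 + q ^ (1 + r₃) * h4))

end

end field

/-! ### Relations between the coefficients of `z ^ n` -/

set_option linter.unusedSimpArgs false
section ssdef

variable {K : Type*} [Field K]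
/-- The coefficient of `z ^ n`, up to the linear twist `q ^ (r₁ n)`, in
`∑ z ^ n₁ q ^ (Q(n) + r₁ n₁ + r₂ n₂ + r₃ n₃ + r₄ n₄) / (q;q)_{n₁} [n₁, n₂][n₁, n₄][n₂, n₃]`,
where `Q(n) = n₁² + n₂² + n₃² + n₄² - n₁ n₂ + n₂ n₄`; it vanishes for `n < 0`. -/
noncomputable def ss (q : K) (r₂ r₃ r₄ n : ℤ) : K :=
  q ^ n ^ 2 * pf q n * vv q n n (r₂ - n) r₃ r₄

end ssdef

section tt

variable {K : Type*} [Field K] {q : K} (h0 : q ≠ 0) (hq : ∀ n : ℕ, 0 < n → q ^ n ≠ 1)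
  {n : ℤ} {y : K} (hy : y = q ^ (n - 2))

include h0 hq hy

/-- `ww_R1`–`ww_R4` are the relations `ss_R1`–`ss_R4` multiplied by `(q;q)_n`, up to a power of
`q`, with `y = q ^ (n - 2)`. Each is a linear combination of the elementary relations above. -/
theorem ww_R1 : y ^ 4 * q ^ 4 * ww q n 2 2 1 1 1 - y ^ 4 * q ^ 4 * (q ^ 2 * y) * ww q n 2 2 1 1 0 -
    y ^ 2 * q * (q * y) ^ 2 * (1 - q ^ 2 * y) * q ^ 4 * ww q n 1 1 3 2 2 -
    y ^ 2 * q * (q * y) ^ 3 * (1 - q ^ 2 * y) * q ^ 2 * ww q n 1 1 2 1 1 -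
    y ^ 2 * q * (q * y) ^ 2 * (1 - q ^ 2 * y) * q * ww q n 1 1 1 1 0 = 0 := by
  have e0 := ww_Eb h0 hq hy 2 2 1 1 1
  have e1 := ww_D4 h0 hq hy 1 1 1 1 0
  have e2 := ww_P2b h0 hq hy 1 1 1 1 1
  simp only [Int.reduceAdd, Int.reduceSub, Int.reduceNeg, zpow_ofNat, zpow_one, zpow_zero,
    one_mul] at e0 e1 e2
  linear_combination -q ^ 4 * y ^ 4 * e0 - q ^ 4 * y ^ 4 * (1 - q ^ 2 * y) * e1 +
    q ^ 3 * y ^ 3 * e2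

theorem ww_R2 : y ^ 4 * q ^ 4 * ww q n 2 2 1 1 0 +
    y ^ 2 * q * (q * y) * (1 - q ^ 2 * y) * q ^ 3 * ww q n 1 1 3 2 2 -
    y ^ 4 * q ^ 4 * (q ^ 2 * y) * ww q n 2 2 0 1 0 -
    y ^ 2 * q * (q * y) ^ 2 * (1 - q ^ 2 * y) * q * ww q n 1 1 1 0 0 -
    y ^ 2 * q * (q * y) ^ 3 * (1 - q ^ 2 * y) * q ^ 2 * ww q n 1 1 1 1 0 -
    y ^ 2 * q * (q * y) ^ 4 * (1 - q ^ 2 * y) * q ^ 3 * ww q n 1 1 2 1 1 = 0 := by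
  have e0 := ww_Ea h0 hq hy 2 2 1 1 0
  have e1 := ww_D4 h0 hq hy 1 1 1 0 0
  have e2 := ww_P2a h0 hq hy 1 1 1 0 1
  have e3 := ww_P2b h0 hq hy 1 1 1 0 1
  have e4 := ww_P4b h0 hq hy 1 1 1 1 0
  have e5 := ww_D4 h0 hq hy 1 1 1 1 0
  have e6 := ww_D2 h0 hq hy 1 1 1 1 1
  simp only [Int.reduceAdd, Int.reduceSub, Int.reduceNeg, zpow_ofNat, zpow_one, zpow_zero,
    one_mul] at e0 e1 e2 e3 e4 e5 e6
  linear_combination -q ^ 4 * y ^ 4 * e0 - q ^ 4 * y ^ 4 * (1 - q ^ 2 * y) * e1 -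
    q ^ 3 * y ^ 3 * e2 + q ^ 3 * y ^ 3 * e3 + q ^ 4 * y ^ 4 * e4 +
    q ^ 4 * y ^ 4 * (1 - q ^ 2 * y) ^ 2 * e5 + q ^ 3 * y ^ 3 * (1 - q ^ 2 * y) ^ 2 * e6

theorem ww_R3 : y ^ 4 * q ^ 4 * ww q n 2 2 0 1 0 - y ^ 4 * q ^ 4 * (q ^ 2 * y) * ww q n 2 2 0 0 0 -
    y ^ 4 * q ^ 4 * (q ^ 2 * y) * ww q n 2 2 1 1 1 -
    y ^ 2 * q * (q * y) ^ 2 * (1 - q ^ 2 * y) * q * ww q n 1 1 1 0 0 -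
    y ^ 4 * (1 - q ^ 2 * y) * (1 - q * y) * q ^ 4 * ww q n 0 0 3 1 1 -
    y ^ 3 * (1 - q ^ 2 * y) * (1 - q * y) * q ^ 3 * ww q n 0 0 2 1 0 +
    y ^ 4 * q ^ 4 * (q ^ 2 * y) ^ 2 * ww q n 2 2 1 1 0 +
    y ^ 2 * q * (q * y) ^ 3 * (1 - q ^ 2 * y) * q ^ 5 * ww q n 1 1 3 2 2 -
    y ^ 2 * q * (q * y) ^ 2 * (1 - q ^ 2 * y) * q * ww q n 1 1 2 1 0 -
    y ^ 3 * (1 - q ^ 2 * y) * (1 - q * y) * q ^ 6 * ww q n 0 0 4 2 2 = 0 := by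
  have e0 := ww_D3 h0 hq hy 2 2 0 0 0
  have e1 := ww_D2 h0 hq hy 2 2 0 2 0
  have e2 := ww_Eb h0 hq hy 2 2 1 1 1
  have e3 := ww_Ea h0 hq hy 2 2 2 2 1
  have e4 := ww_P4b h0 hq hy 2 1 0 1 0
  have e5 := ww_P2b h0 hq hy 1 1 0 1 0
  have e6 := ww_D2 h0 hq hy 1 1 0 1 0
  have e7 := ww_Eb h0 hq hy 1 1 2 1 1
  have e8 := ww_P4b h0 hq hy 1 1 2 2 1
  have e9 := ww_D4 h0 hq hy 0 0 2 1 0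
  have e10 := ww_P2b h0 hq hy 0 0 2 1 1
  simp only [Int.reduceAdd, Int.reduceSub, Int.reduceNeg, zpow_ofNat, zpow_one, zpow_zero,
    one_mul] at e0 e1 e2 e3 e4 e5 e6 e7 e8 e9 e10
  linear_combination -q ^ 6 * y ^ 5 * e0 - q ^ 6 * y ^ 4 * e1 + q ^ 6 * y ^ 5 * e2 +
    q ^ 6 * y ^ 4 * e3 + q ^ 4 * y ^ 4 * e4 + q ^ 3 * y ^ 3 * e5 +
    q ^ 3 * y ^ 3 * (1 - q ^ 2 * y) * e6 - q ^ 3 * y ^ 3 * (1 - q ^ 2 * y) * e7 -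
    q ^ 6 * y ^ 4 * e8 - q ^ 3 * y ^ 3 * (1 - q ^ 2 * y) * (1 - q * y) * e9 +
    q ^ 2 * y ^ 2 * (1 - q ^ 2 * y) * e10

theorem ww_R4 : (1 - q ^ 2 * y) *
    (y ^ 4 * q ^ 4 * ww q n 2 2 0 0 0 -
      y ^ 4 * q ^ 4 * (q ^ 2 * y) * ww q n 2 2 0 1 0 -
      y ^ 4 * q ^ 4 * (q ^ 2 * y) * ww q n 2 2 0 0 0 -
      y ^ 2 * q * (q * y) * (1 - q ^ 2 * y) * q * ww q n 1 1 2 1 0 -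
      y ^ 2 * (1 - q ^ 2 * y) * (1 - q * y) * q ^ 5 * ww q n 0 0 4 2 2 +
      y ^ 4 * q ^ 4 * (q ^ 2 * y) ^ 2 * ww q n 2 2 0 0 0 -
        y ^ 2 * q * (q * y) ^ 2 * (1 - q ^ 2 * y) * q * ww q n 1 1 1 0 0) = 0 := by
  have e0 := ww_D4 h0 hq hy 1 2 0 0 (-1)
  have e1 := ww_P2a h0 hq hy 1 2 0 0 0
  have e2 := ww_P2b h0 hq hy 1 2 0 0 0
  have e3 := ww_P2b h0 hq hy 1 2 0 1 0
  have e4 := ww_D2 h0 hq hy 1 2 0 1 0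
  have e5 := ww_P4a h0 hq hy 1 1 0 0 (-1)
  have e6 := ww_D2 h0 hq hy 1 1 0 0 0
  have e7 := ww_D3 h0 hq hy 1 1 1 (-1) 0
  have e8 := ww_Eb h0 hq hy 1 1 2 0 1
  have e9 := ww_Ea h0 hq hy 1 1 2 1 0
  have e10 := ww_P2a h0 hq hy 0 0 2 0 1
  have e11 := ww_P4a h0 hq hy 0 0 2 1 0
  have e12 := ww_D2 h0 hq hy 0 0 2 1 1
  simp only [Int.reduceAdd, Int.reduceSub, Int.reduceNeg, zpow_ofNat, zpow_one, zpow_zero,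
    one_mul] at e0 e1 e2 e3 e4 e5 e6 e7 e8 e9 e10 e11 e12
  linear_combination -q ^ 4 * y ^ 4 * (1 - q ^ 2 * y) ^ 2 * e0 + q ^ 7 * y ^ 5 * e1 +
    q ^ 3 * y ^ 3 * (1 - q ^ 2 * y) * e2 - q ^ 5 * y ^ 4 * e3 -
    q ^ 5 * y ^ 4 * (1 - q ^ 2 * y) * e4 + q ^ 4 * y ^ 4 * (1 - q ^ 2 * y) * e5 +
    q ^ 3 * y ^ 3 * (1 - q ^ 2 * y) ^ 2 * e6 + q ^ 4 * y ^ 4 * (1 - q ^ 2 * y) ^ 2 * e7 -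
    q ^ 3 * y ^ 3 * (1 - q ^ 2 * y) ^ 2 * e8 + q ^ 3 * y ^ 3 * (1 - q ^ 2 * y) ^ 2 * e9 +
    q ^ 2 * y ^ 2 * (1 - q ^ 2 * y) ^ 2 * e10 - q ^ 3 * y ^ 3 * (1 - q ^ 2 * y) ^ 2 * e11 -
    q ^ 2 * y ^ 2 * (1 - q ^ 2 * y) ^ 2 * (1 - q * y) * e12

omit h0 hq hy in
theorem ss_neg {n : ℤ} (hn : n < 0) (r₂ r₃ r₄ : ℤ) : ss q r₂ r₃ r₄ n = 0 := by
  rw [ss, pf_neg hn]; ring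

omit h0 hq hy in
theorem ss_zero (r₂ r₃ r₄ : ℤ) : ss q r₂ r₃ r₄ 0 = 1 := by
  rw [ss, pf_zero, vv_zero]; simp

omit hq in
/-- `(q;q)_n` times the coefficient of `z ^ n`, in terms of `ww`; `pf_mul_ss₁` and `pf_mul_ss₂` do
the same for the coefficients of `z ^ (n - 1)` and `z ^ (n - 2)`. -/
theorem pf_mul_ss₀ (r₂ r₃ r₄ : ℤ) : pf q n * ss q r₂ r₃ r₄ n =
    q ^ (n - 2) ^ 2 * (y ^ 4 * q ^ 4 * ww q n 2 2 r₂ r₃ r₄) := by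
  have e : q ^ n ^ 2 = q ^ (n - 2) ^ 2 * (y ^ 4 * q ^ 4) := by
    rw [hy, ← zpow_natCast, ← zpow_natCast, ← zpow_mul, ← zpow_add₀ h0, ← zpow_add₀ h0]
    congr 1; push_cast; ring
  rw [ss, ww, show n - 2 + 2 = n by ring, e]
  ring

omit hq in
theorem pf_mul_ss₁ (hn : 1 ≤ n) (r₂ r₃ r₄ s : ℤ) (hs : r₂ + 1 = s) :
    pf q n * ss q r₂ r₃ r₄ (n - 1) =
    q ^ (n - 2) ^ 2 * (y ^ 2 * q * (1 - q ^ 2 * y) * ww q n 1 1 s r₃ r₄) := by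
  subst hs
  have e : q ^ (n - 1) ^ 2 = q ^ (n - 2) ^ 2 * (y ^ 2 * q) := by
    rw [hy, ← zpow_natCast, ← zpow_mul, ← zpow_add_one₀ h0, ← zpow_add₀ h0]
    congr 1; push_cast; ring
  have e2 : q ^ n = q ^ 2 * y := by
    rw [hy, ← zpow_natCast, ← zpow_add₀ h0]; congr 1; push_cast; ring
  have h := pf_succ (q := q) (m := n - 1) (by omega)
  rw [sub_add_cancel, e2] at h
  rw [ss, ww, show n - 2 + 1 = n - 1 by ring, e, h, show r₂ - (n - 1) = r₂ + 1 - n by ring]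
  ring

omit hq in
theorem pf_mul_ss₂ (hn : 1 ≤ n) (r₂ r₃ r₄ s : ℤ) (hs : r₂ + 2 = s) :
    pf q n * ss q r₂ r₃ r₄ (n - 2) =
    q ^ (n - 2) ^ 2 * ((1 - q ^ 2 * y) * (1 - q * y) * ww q n 0 0 s r₃ r₄) := by
  subst hs
  have e2 : q ^ n = q ^ 2 * y := by
    rw [hy, ← zpow_natCast, ← zpow_add₀ h0]; congr 1; push_cast; ring
  have e3 : q ^ (n - 1) = q * y := by
    rw [hy, ← zpow_one_add₀ h0]; congr 1; ring
  rw [ss, ww, show n - 2 + 0 = n - 2 by ring, show r₂ - (n - 2) = r₂ + 2 - n by ring]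
  rcases hn.eq_or_lt with rfl | hn
  · simp [pf_neg]
  have h := pf_succ (q := q) (m := n - 1) (by omega)
  have h' := pf_succ (q := q) (m := n - 2) (by omega)
  rw [sub_add_cancel, e2] at h
  rw [show n - 2 + 1 = n - 1 by ring, e3] at h'
  rw [h, h']
  ring

/-- `ss_R1`–`ss_R4` are the four relations between `z`-coefficients, with `y = q ^ (n - 2)`, that
are needed to verify the `q`-difference system for the seven fermionic sums. -/
theorem ss_R1 : ss q 1 1 1 n - (q ^ 2 * y) * ss q 1 1 0 n -
    (q * y) ^ 2 * q ^ 4 * ss q 2 2 2 (n - 1) - (q * y) ^ 3 * q ^ 2 * ss q 1 1 1 (n - 1) -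
    (q * y) ^ 2 * q * ss q 0 1 0 (n - 1) = 0 := by
  have e2 : q ^ 2 * y = q ^ n := by
    rw [hy, ← zpow_natCast, ← zpow_add₀ h0]; congr 1; push_cast; ring
  rcases lt_or_ge n 1 with hn | hn
  · rcases lt_or_eq_of_le (Int.le_sub_one_of_lt hn) with hn | h
    · simp only [ss_neg (show n < 0 by omega), ss_neg (show n - 1 < 0 by omega),
        ss_neg (show n - 2 < 0 by omega)]
      ring
    · obtain rfl : n = 0 := by omega
      rw [zpow_zero] at e2
      simp [ss_zero, ss_neg, e2]
  have h := ww_R1 h0 hq hy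
  refine (mul_eq_zero.mp ?_).resolve_left (pf_ne hq (show 0 ≤ n by omega))
  linear_combination pf_mul_ss₀ h0 hy 1 1 1 - (q ^ 2 * y) * pf_mul_ss₀ h0 hy 1 1 0 -
    (q * y) ^ 2 * q ^ 4 * pf_mul_ss₁ h0 hy hn 2 2 2 3 rfl -
    (q * y) ^ 3 * q ^ 2 * pf_mul_ss₁ h0 hy hn 1 1 1 2 rfl -
    (q * y) ^ 2 * q * pf_mul_ss₁ h0 hy hn 0 1 0 1 rfl +
    q ^ (n - 2) ^ 2 * h

theorem ss_R2 : ss q 1 1 0 n + (q * y) * q ^ 3 * ss q 2 2 2 (n - 1) - (q ^ 2 * y) * ss q 0 1 0 n -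
    (q * y) ^ 2 * q * ss q 0 0 0 (n - 1) - (q * y) ^ 3 * q ^ 2 * ss q 0 1 0 (n - 1) -
    (q * y) ^ 4 * q ^ 3 * ss q 1 1 1 (n - 1) = 0 := by
  have e2 : q ^ 2 * y = q ^ n := by
    rw [hy, ← zpow_natCast, ← zpow_add₀ h0]; congr 1; push_cast; ring
  rcases lt_or_ge n 1 with hn | hn
  · rcases lt_or_eq_of_le (Int.le_sub_one_of_lt hn) with hn | h
    · simp only [ss_neg (show n < 0 by omega), ss_neg (show n - 1 < 0 by omega),
        ss_neg (show n - 2 < 0 by omega)]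
      ring
    · obtain rfl : n = 0 := by omega
      rw [zpow_zero] at e2
      simp [ss_zero, ss_neg, e2]
  have h := ww_R2 h0 hq hy
  refine (mul_eq_zero.mp ?_).resolve_left (pf_ne hq (show 0 ≤ n by omega))
  linear_combination pf_mul_ss₀ h0 hy 1 1 0 + (q * y) * q ^ 3 * pf_mul_ss₁ h0 hy hn 2 2 2 3 rfl -
    (q ^ 2 * y) * pf_mul_ss₀ h0 hy 0 1 0 - (q * y) ^ 2 * q * pf_mul_ss₁ h0 hy hn 0 0 0 1 rfl -
    (q * y) ^ 3 * q ^ 2 * pf_mul_ss₁ h0 hy hn 0 1 0 1 rfl -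
    (q * y) ^ 4 * q ^ 3 * pf_mul_ss₁ h0 hy hn 1 1 1 2 rfl +
    q ^ (n - 2) ^ 2 * h

theorem ss_R3 : ss q 0 1 0 n - (q ^ 2 * y) * ss q 0 0 0 n - (q ^ 2 * y) * ss q 1 1 1 n -
    (q * y) ^ 2 * q * ss q 0 0 0 (n - 1) - y ^ 4 * q ^ 4 * ss q 1 1 1 (n - 2) -
    y ^ 3 * q ^ 3 * ss q 0 1 0 (n - 2) + (q ^ 2 * y) ^ 2 * ss q 1 1 0 n +
    (q * y) ^ 3 * q ^ 5 * ss q 2 2 2 (n - 1) - (q * y) ^ 2 * q * ss q 1 1 0 (n - 1) -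
    y ^ 3 * q ^ 6 * ss q 2 2 2 (n - 2) = 0 := by
  have e2 : q ^ 2 * y = q ^ n := by
    rw [hy, ← zpow_natCast, ← zpow_add₀ h0]; congr 1; push_cast; ring
  rcases lt_or_ge n 1 with hn | hn
  · rcases lt_or_eq_of_le (Int.le_sub_one_of_lt hn) with hn | h
    · simp only [ss_neg (show n < 0 by omega), ss_neg (show n - 1 < 0 by omega),
        ss_neg (show n - 2 < 0 by omega)]
      ring
    · obtain rfl : n = 0 := by omega
      rw [zpow_zero] at e2
      simp [ss_zero, ss_neg, e2]
  have h := ww_R3 h0 hq hy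
  refine (mul_eq_zero.mp ?_).resolve_left (pf_ne hq (show 0 ≤ n by omega))
  linear_combination pf_mul_ss₀ h0 hy 0 1 0 - (q ^ 2 * y) * pf_mul_ss₀ h0 hy 0 0 0 -
    (q ^ 2 * y) * pf_mul_ss₀ h0 hy 1 1 1 - (q * y) ^ 2 * q * pf_mul_ss₁ h0 hy hn 0 0 0 1 rfl -
    y ^ 4 * q ^ 4 * pf_mul_ss₂ h0 hy hn 1 1 1 3 rfl -
    y ^ 3 * q ^ 3 * pf_mul_ss₂ h0 hy hn 0 1 0 2 rfl + (q ^ 2 * y) ^ 2 * pf_mul_ss₀ h0 hy 1 1 0 +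
    (q * y) ^ 3 * q ^ 5 * pf_mul_ss₁ h0 hy hn 2 2 2 3 rfl -
    (q * y) ^ 2 * q * pf_mul_ss₁ h0 hy hn 1 1 0 2 rfl -
    y ^ 3 * q ^ 6 * pf_mul_ss₂ h0 hy hn 2 2 2 4 rfl +
    q ^ (n - 2) ^ 2 * h

theorem ss_R4 : ss q 0 0 0 n - (q ^ 2 * y) * ss q 0 1 0 n - (q ^ 2 * y) * ss q 0 0 0 n -
    (q * y) * q * ss q 1 1 0 (n - 1) - y ^ 2 * q ^ 5 * ss q 2 2 2 (n - 2) +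
    (q ^ 2 * y) ^ 2 * ss q 0 0 0 n - (q * y) ^ 2 * q * ss q 0 0 0 (n - 1) = 0 := by
  have e2 : q ^ 2 * y = q ^ n := by
    rw [hy, ← zpow_natCast, ← zpow_add₀ h0]; congr 1; push_cast; ring
  rcases lt_or_ge n 1 with hn | hn
  · rcases lt_or_eq_of_le (Int.le_sub_one_of_lt hn) with hn | h
    · simp only [ss_neg (show n < 0 by omega), ss_neg (show n - 1 < 0 by omega),
        ss_neg (show n - 2 < 0 by omega)]
      ring
    · obtain rfl : n = 0 := by omega
      rw [zpow_zero] at e2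
      simp [ss_zero, ss_neg, e2]
  have hx : 1 - q ^ 2 * y ≠ 0 := by
    rw [e2]; exact sub_ne_zero.mpr (zpow_ne_one hq (by omega)).symm
  have h := (mul_eq_zero.mp (ww_R4 h0 hq hy)).resolve_left hx
  refine (mul_eq_zero.mp ?_).resolve_left (pf_ne hq (show 0 ≤ n by omega))
  linear_combination pf_mul_ss₀ h0 hy 0 0 0 - (q ^ 2 * y) * pf_mul_ss₀ h0 hy 0 1 0 -
    (q ^ 2 * y) * pf_mul_ss₀ h0 hy 0 0 0 - (q * y) * q * pf_mul_ss₁ h0 hy hn 1 1 0 2 rfl -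
    y ^ 2 * q ^ 5 * pf_mul_ss₂ h0 hy hn 2 2 2 4 rfl + (q ^ 2 * y) ^ 2 * pf_mul_ss₀ h0 hy 0 0 0 -
    (q * y) ^ 2 * q * pf_mul_ss₁ h0 hy hn 0 0 0 1 rfl +
    q ^ (n - 2) ^ 2 * h

end tt

/-! ### The `q`-difference system and the fermionic sums -/

/-- The `q`-difference system satisfied, for the seven profiles
`(5,0,0), (4,1,0), (4,0,1), (3,2,0), (3,1,1), (3,0,2), (2,2,1)` in this order, by the
finite forms of the `A₂` character sums; together with the value at `0` it determines them. -/
structure Sol {K : Type*} [Field K] (q : K) (f : Fin 7 → ℤ → K) : Prop where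
  base : ∀ c, f c 0 = 1
  e0 : ∀ N, f 0 (N - 1) = f 0 N - q ^ N * f 1 N
  e1 : ∀ N, f 1 (N - 1) = f 1 N - q ^ N * (f 3 N + f 2 N) + (q ^ N) ^ 2 * f 4 N
  e2 : ∀ N, f 2 (N - 1) = f 2 N - q ^ N * (f 4 N + f 0 N) + (q ^ N) ^ 2 * f 1 N
  e3 : ∀ N, f 3 (N - 1) = f 3 N - q ^ N * (f 5 N + f 4 N) + (q ^ N) ^ 2 * f 6 N
  e4 : ∀ N, f 4 (N - 1) =
    f 4 N - q ^ N * (f 6 N + f 1 N) + (q ^ N) ^ 2 * f 3 N - q ^ N * f 5 (N - 1)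
  e5 : ∀ N, f 5 (N - 1) = f 5 N - q ^ N * (f 6 N + f 2 N) + (q ^ N) ^ 2 * f 4 N
  e6 : ∀ N, f 6 (N - 1) =
    f 6 N - q ^ N * (f 4 N + f 6 N) + (q ^ N) ^ 2 * f 6 N - q ^ N * f 3 (N - 1)

section FF

variable {K : Type*} [Field K] {q : K}

/-- The transform `N ↦ ∑ₙ g n / (q;q)_{N - n}` of a sequence. -/
noncomputable def FF (q : K) (g : ℤ → K) (N : ℤ) : K := ∑ᶠ n, g n * ip q (N - n)

theorem FF_fin {g : ℤ → K} (hg : ∀ n < 0, g n = 0) (N : ℤ) :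
    Function.HasFiniteSupport fun n => g n * ip q (N - n) := by
  refine (Set.finite_Icc 0 N).subset fun n hn => ?_
  simp only [Function.mem_support, ne_eq, mul_eq_zero, not_or] at hn
  refine ⟨?_, ?_⟩
  · by_contra h; exact hn.1 (hg n (not_le.mp h))
  · by_contra h; exact hn.2 (ip_neg (by omega))

theorem FF_add {g h : ℤ → K} (hg : ∀ n < 0, g n = 0) (hh : ∀ n < 0, h n = 0) (N : ℤ) :
    FF q (fun n => g n + h n) N = FF q g N + FF q h N := by
  simp only [FF, add_mul]
  exact finsum_add_distrib (FF_fin hg N) (FF_fin hh N)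

theorem FF_sub {g h : ℤ → K} (hg : ∀ n < 0, g n = 0) (hh : ∀ n < 0, h n = 0) (N : ℤ) :
    FF q (fun n => g n - h n) N = FF q g N - FF q h N := by
  simp only [FF, sub_mul]
  exact finsum_sub_distrib (FF_fin hg N) (FF_fin hh N)

theorem FF_shift (g : ℤ → K) (N : ℤ) : FF q (fun n => g (n - 1)) N = FF q g (N - 1) := by
  rw [FF, FF, ← finsum_comp_equiv (Equiv.addRight (1 : ℤ))]
  refine finsum_congr fun n => ?_
  rw [Equiv.coe_addRight, add_sub_cancel_right, show N - (n + 1) = N - 1 - n by ring]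

theorem FF_zero {g : ℤ → K} (hg : ∀ n < 0, g n = 0) : FF q g 0 = g 0 := by
  rw [FF, finsum_eq_single _ 0]
  · simp [ip_zero]
  · intro n hn
    rcases lt_or_gt_of_ne hn with h | h
    · rw [hg n h, zero_mul]
    · rw [ip_neg (by omega), mul_zero]

theorem FF_const_zero (N : ℤ) : FF q (fun _ => 0) N = 0 := by simp [FF]

variable (h0 : q ≠ 0) (hq : ∀ n : ℕ, 0 < n → q ^ n ≠ 1)
include h0 hq

/-- Multiplication by `q ^ N` on the transforms. -/
theorem FF_qpow {g : ℤ → K} (hg : ∀ n < 0, g n = 0) (N : ℤ) :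
    q ^ N * FF q g N = FF q (fun n => q ^ n * g n) N - FF q (fun n => q ^ n * g n) (N - 1) := by
  have hg' : ∀ n < 0, q ^ n * g n = 0 := fun n hn => by rw [hg n hn, mul_zero]
  rw [FF, FF, FF, ← finsum_sub_distrib (FF_fin hg' N) (FF_fin hg' _), mul_finsum]
  refine finsum_congr fun n => ?_
  have h := ip_step hq (N - n)
  rw [show N - n - 1 = N - 1 - n by ring] at h
  have e : q ^ N = q ^ n * q ^ (N - n) := by rw [← zpow_add₀ h0]; congr 1; ring
  rw [h, e]
  ring

/-- A relation between sequences of `z`-coefficients gives a `q`-difference equation for the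
transforms. -/
theorem FF_rel {g a a' b c : ℤ → K} (ha : ∀ n < 0, a n = 0) (ha' : ∀ n < 0, a' n = 0)
    (hb : ∀ n < 0, b n = 0) (hc : ∀ n < 0, c n = 0)
    (h : ∀ n, g n = q ^ n * (a n + a' n - (q ^ n * b n - q ^ (n - 1) * b (n - 1)) + c (n - 1)))
    (N : ℤ) :
    FF q g (N - 1) = FF q g N - q ^ N * (FF q a N + FF q a' N) + (q ^ N) ^ 2 * FF q b N -
      q ^ N * FF q c (N - 1) := by
  have hb' : ∀ n < 0, q ^ n * b n = 0 := fun n hn => by rw [hb n hn, mul_zero]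
  have hbs : ∀ n < 0, q ^ (n - 1) * b (n - 1) = 0 := fun n hn => hb' _ (by omega)
  have hcs : ∀ n < 0, c (n - 1) = 0 := fun n hn => hc _ (by omega)
  have hbd : ∀ n < 0, q ^ n * b n - q ^ (n - 1) * b (n - 1) = 0 := fun n hn => by
    rw [hb' n hn, hbs n hn, sub_zero]
  have haa : ∀ n < 0, a n + a' n = 0 := fun n hn => by rw [ha n hn, ha' n hn, add_zero]
  have hab : ∀ n < 0, a n + a' n - (q ^ n * b n - q ^ (n - 1) * b (n - 1)) = 0 := fun n hn => by
    rw [haa n hn, hbd n hn, sub_zero]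
  have hall : ∀ n < 0,
      a n + a' n - (q ^ n * b n - q ^ (n - 1) * b (n - 1)) + c (n - 1) = 0 := fun n hn => by
    rw [hab n hn, hcs n hn, add_zero]
  have e := FF_qpow h0 hq hall N
  rw [← funext h, FF_add hab hcs, FF_sub haa hbd, FF_add ha ha', FF_sub hb' hbs, FF_shift c,
    FF_shift fun n => q ^ n * b n, ← FF_qpow h0 hq hb] at e
  linear_combination e

end FF

section

variable {K : Type*} [Field K] {q : K}

/-- The `z`-coefficients of the fermionic sums attached to the seven profiles, in the order of
`Sol`; the last one belongs to `(2,2,1)`. -/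
noncomputable def gg (q : K) : Fin 7 → ℤ → K := ![
  fun n => q ^ n * ss q 1 1 1 n,
  fun n => ss q 1 1 1 n,
  fun n => q ^ n * ss q 0 1 0 n + q * (q ^ (n - 1)) ^ 2 * ss q 1 1 1 (n - 1),
  fun n => ss q 1 1 0 n + q ^ 3 * q ^ (n - 1) * ss q 2 2 2 (n - 1),
  fun n => ss q 0 1 0 n,
  fun n => q ^ n * ss q 0 0 0 n + q ^ 2 * (q ^ (n - 1)) ^ 3 * ss q 1 1 1 (n - 1) +
    q * (q ^ (n - 1)) ^ 2 * ss q 0 1 0 (n - 1),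
  fun n => ss q 0 0 0 n]

theorem gg_neg (q : K) (c : Fin 7) : ∀ n < 0, gg q c n = 0 := by
  intro n hn
  have h (r₂ r₃ r₄) : ss q r₂ r₃ r₄ n = 0 := ss_neg hn ..
  have h' (r₂ r₃ r₄) : ss q r₂ r₃ r₄ (n - 1) = 0 := ss_neg (by omega) ..
  fin_cases c <;> simp [gg, h, h']

theorem gg_zero (c : Fin 7) : gg q c 0 = 1 := by
  fin_cases c <;> simp [gg, ss_zero, ss_neg]

/-- The fermionic sums solve the system. -/
theorem sol_ferm (h0 : q ≠ 0) (hq : ∀ n : ℕ, 0 < n → q ^ n ≠ 1) :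
    Sol q fun c => FF q (gg q c) := by
  have z : ∀ n < (0 : ℤ), (fun _ => 0 : ℤ → K) n = 0 := fun _ _ => rfl
  have p1 (n : ℤ) : q ^ n = q ^ 2 * q ^ (n - 2) := by
    rw [← zpow_natCast, ← zpow_add₀ h0]; congr 1; push_cast; ring
  have p2 (n : ℤ) : q ^ (n - 1) = q * q ^ (n - 2) := by
    rw [← zpow_one_add₀ h0]; congr 1; ring
  have p3 (n : ℤ) : n - 1 - 1 = n - 2 := by ring
  constructor
  · intro c; rw [FF_zero (gg_neg q c), gg_zero]
  · intro N
    have := FF_rel h0 hq (g := gg q 0) (gg_neg q 1) z z z ?_ N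
    · simpa [FF_const_zero] using this
    · intro n; simp [gg]
  · intro N
    have := FF_rel h0 hq (g := gg q 1) (gg_neg q 3) (gg_neg q 2) (gg_neg q 4) z ?_ N
    · simpa [FF_const_zero] using this
    · intro n
      have e := ss_R1 h0 hq (n := n) rfl
      simp [gg, p1 n, p2 n]
      linear_combination e
  · intro N
    have := FF_rel h0 hq (g := gg q 2) (gg_neg q 4) (gg_neg q 0) (gg_neg q 1) z ?_ N
    · simpa [FF_const_zero] using this
    · intro n
      simp [gg, p1 n, p2 n]
      ring
  · intro N
    have := FF_rel h0 hq (g := gg q 3) (gg_neg q 5) (gg_neg q 4) (gg_neg q 6) z ?_ N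
    · simpa [FF_const_zero] using this
    · intro n
      have e := ss_R2 h0 hq (n := n) rfl
      simp [gg, p1 n, p2 n]
      linear_combination e
  · intro N
    refine FF_rel h0 hq (g := gg q 4) (gg_neg q 6) (gg_neg q 1) (gg_neg q 3) (gg_neg q 5) ?_ N
    intro n
    have e := ss_R3 h0 hq (n := n) rfl
    simp [gg, p1 n, p2 n, p3]
    linear_combination e
  · intro N
    have := FF_rel h0 hq (g := gg q 5) (gg_neg q 6) (gg_neg q 2) (gg_neg q 4) z ?_ N
    · simpa [FF_const_zero] using this
    · intro n
      simp [gg, p1 n, p2 n]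
      ring
  · intro N
    refine FF_rel h0 hq (g := gg q 6) (gg_neg q 4) (gg_neg q 6) (gg_neg q 6) (gg_neg q 3) ?_ N
    intro n
    have e := ss_R4 h0 hq (n := n) rfl
    simp [gg, p1 n, p2 n, p3]
    linear_combination e

/-- The system determines its solution: the difference of two solutions at `N` would be `q ^ N`
times a combination of itself with integral coefficients. -/
theorem Sol.unique {Γ : Type*} [LinearOrderedCommGroupWithZero Γ] (v : Valuation K Γ)
    (hv : v q < 1) {f g : Fin 7 → ℤ → K} (hf : Sol q f) (hg : Sol q g) (N : ℕ) (c : Fin 7) :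
    f c N = g c N := by
  induction N generalizing c with
  | zero => simp [hf.base, hg.base]
  | succ N ih =>
    have ih' (c) : f c ((N + 1 : ℕ) - 1) = g c ((N + 1 : ℕ) - 1) := by
      have := ih c; push_cast; rwa [add_sub_cancel_right]
    set M : ℤ := ((N + 1 : ℕ) : ℤ) with hM
    set x := q ^ M with hx
    set d : Fin 7 → K := fun c => f c M - g c M with hd
    have hvx : v x < 1 := by
      rw [hx, hM, zpow_natCast, map_pow]; exact pow_lt_one' hv (by omega)
    obtain ⟨m, -, hm⟩ := Finset.exists_max_image Finset.univ (fun c => v (d c)) ⟨0, by simp⟩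
    have key : ∀ c, ∃ t, d c = x * t ∧ v t ≤ v (d m) := by
      have hs {a b e : K} (ha : v a ≤ v (d m)) (hb : v b ≤ v (d m)) (he : v e ≤ v (d m)) :
          v (a + b - x * e) ≤ v (d m) := by
        refine (v.map_sub _ _).trans (max_le ((v.map_add _ _).trans (max_le ha hb)) ?_)
        rw [map_mul]
        calc v x * v e ≤ 1 * v e := by gcongr
          _ ≤ _ := by rwa [one_mul]
      have h (c) : v (d c) ≤ v (d m) := hm c (Finset.mem_univ _)
      intro c
      fin_cases c
      · refine ⟨d 1, ?_, h 1⟩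
        change d 0 = _
        linear_combination ih' 0 - hf.e0 M + hg.e0 M
      · refine ⟨d 3 + d 2 - x * d 4, ?_, hs (h 3) (h 2) (h 4)⟩
        change d 1 = _
        linear_combination ih' 1 - hf.e1 M + hg.e1 M
      · refine ⟨d 4 + d 0 - x * d 1, ?_, hs (h 4) (h 0) (h 1)⟩
        change d 2 = _
        linear_combination ih' 2 - hf.e2 M + hg.e2 M
      · refine ⟨d 5 + d 4 - x * d 6, ?_, hs (h 5) (h 4) (h 6)⟩
        change d 3 = _
        linear_combination ih' 3 - hf.e3 M + hg.e3 M
      · refine ⟨d 6 + d 1 - x * d 3, ?_, hs (h 6) (h 1) (h 3)⟩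
        change d 4 = _
        linear_combination ih' 4 - hf.e4 M + hg.e4 M + q ^ M * ih' 5
      · refine ⟨d 6 + d 2 - x * d 4, ?_, hs (h 6) (h 2) (h 4)⟩
        change d 5 = _
        linear_combination ih' 5 - hf.e5 M + hg.e5 M
      · refine ⟨d 4 + d 6 - x * d 6, ?_, hs (h 4) (h 6) (h 6)⟩
        change d 6 = _
        linear_combination ih' 6 - hf.e6 M + hg.e6 M + q ^ M * ih' 3
    obtain ⟨t, ht, htm⟩ := key m
    have hm0 : v (d m) = 0 := by
      by_contra hne
      have : v (d m) < v (d m) := by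
        calc v (d m) = v x * v t := by rw [ht, map_mul]
          _ ≤ v x * v (d m) := by gcongr
          _ < 1 * v (d m) := by gcongr; exact zero_lt_iff.mpr hne
          _ = v (d m) := one_mul _
      exact lt_irrefl _ this
    have := hm c (Finset.mem_univ _)
    rw [hm0, le_zero_iff, map_eq_zero] at this
    exact sub_eq_zero.mp this

end

/-! ### The bosonic sums -/

section bos

variable {K : Type*} [Field K] {q : K}

/-- The nontrivial character modulo `3`, the sign of the permutation `u mod 3` below. -/
def chi (K : Type*) [Field K] (a : ℤ) : K := if a % 3 = 1 then 1 else if a % 3 = 2 then -1 else 0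

/-- The quadratic exponent. The lattice points are the `u ∈ ℤ³` with `u₀ + u₁ + u₂ = 3` and
pairwise distinct residues modulo `3`, for which the division by `3` is exact; only `u₀, u₁` are
kept. -/
def EE (u v : ℤ) : ℤ :=
  4 * (u ^ 2 + v ^ 2 + (3 - u - v) ^ 2 - 5) / 3 - (v + 2 * (3 - u - v)) + 5

/-- Summand of the bosonic side: with `s = (u₀, u₁ - 1, u₂ - 2)`, the term
`χ(u₁ - u₀) q ^ (E(u) + s·x) / ((q;q)_{N + s₀} (q;q)_{N + s₁} (q;q)_{N + s₂})`. -/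
def bt (q : K) (N x₀ x₁ x₂ : ℤ) (u : ℤ × ℤ) : K :=
  chi K (u.2 - u.1) * q ^ (EE u.1 u.2 + u.1 * x₀ + (u.2 - 1) * x₁ + (1 - u.1 - u.2) * x₂) *
    (ip q (N + u.1) * ip q (N + (u.2 - 1)) * ip q (N + (1 - u.1 - u.2)))

/-- The bosonic side, an alternating sum over the affine Weyl group of type `A₂`. The parameter
`x` records the profile `(5 - x₀ + x₂, x₀ - x₁, x₁ - x₂)`. -/
noncomputable def bb (q : K) (x₀ x₁ x₂ N : ℤ) : K := ∑ᶠ u, bt q N x₀ x₁ x₂ u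

theorem bt_support (N x₀ x₁ x₂ : ℤ) :
    Function.support (bt q N x₀ x₁ x₂) ⊆
      ↑(Finset.Icc ((-N, 1 - N) : ℤ × ℤ) (2 * N, 2 * N + 1)) := by
  intro u hu
  simp only [Function.mem_support, bt, ne_eq, mul_eq_zero, not_or] at hu
  obtain ⟨-, ⟨h1, h2⟩, h3⟩ := hu
  have := ip_ne_zero_imp h1
  have := ip_ne_zero_imp h2
  have := ip_ne_zero_imp h3
  rw [Finset.coe_Icc, Set.mem_Icc, Prod.le_def, Prod.le_def]
  simp only
  omega

theorem bt_fin (N x₀ x₁ x₂ : ℤ) : Function.HasFiniteSupport (bt q N x₀ x₁ x₂) :=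
  (Finset.finite_toSet _).subset (bt_support N x₀ x₁ x₂)

theorem bb_zero (x₀ x₁ x₂ : ℤ) : bb q x₀ x₁ x₂ 0 = 1 := by
  rw [bb, finsum_eq_sum_of_support_subset _ (bt_support 0 x₀ x₁ x₂)]
  have : (Finset.Icc ((-0, 1 - 0) : ℤ × ℤ) (2 * 0, 2 * 0 + 1)) = {(0, 1)} := by decide
  rw [this, Finset.sum_singleton]
  simp [bt, chi, EE, ip_zero]

/-- The linear form `s` sums to `0`, so only the differences of the `xᵢ` matter. -/
theorem bb_translate (x₀ x₁ x₂ N : ℤ) :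
    bb q (x₀ + 1) (x₁ + 1) (x₂ + 1) N = bb q x₀ x₁ x₂ N := by
  refine finsum_congr fun u => ?_
  simp only [bt]
  congr 3; ring

/-- Invariance under the rotation of the profile, which comes from a lattice rotation of `u`. -/
theorem bb_rotate (x₀ x₁ x₂ N : ℤ) : bb q x₀ x₁ x₂ N = bb q x₁ x₂ (x₀ - 5) N := by
  let e : ℤ × ℤ ≃ ℤ × ℤ :=
    { toFun := fun u => (u.2 - 1, 2 - u.1 - u.2)
      invFun := fun u => (1 - u.1 - u.2, u.1 + 1)
      left_inv := fun u => Prod.ext (by ring) (by ring)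
      right_inv := fun u => Prod.ext (by ring) (by ring) }
  rw [bb, bb]
  conv_rhs => rw [← finsum_comp_equiv e]
  refine finsum_congr fun ⟨u, v⟩ => ?_
  simp only [bt, e, Equiv.coe_fn_mk]
  have hE : EE (v - 1) (2 - u - v) = EE u v + 5 * u := by
    have : 4 * ((v - 1) ^ 2 + (2 - u - v) ^ 2 + (3 - (v - 1) - (2 - u - v)) ^ 2 - 5) =
      4 * (u ^ 2 + v ^ 2 + (3 - u - v) ^ 2 - 5) + 8 * u * 3 := by ring
    rw [EE, EE, this, Int.add_mul_ediv_right _ _ (by norm_num)]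
    ring
  have hc : chi K (2 - u - v - (v - 1)) = chi K (v - u) := by
    rw [chi, chi, show (2 - u - v - (v - 1)) % 3 = (v - u) % 3 by omega]
  rw [hE, hc, show N + (2 - u - v - 1) = N + (1 - u - v) by ring,
    show N + (1 - (v - 1) - (2 - u - v)) = N + u by ring,
    show EE u v + 5 * u + (v - 1) * x₁ + (2 - u - v - 1) * x₂ +
      (1 - (v - 1) - (2 - u - v)) * (x₀ - 5) =
      EE u v + u * x₀ + (v - 1) * x₁ + (1 - u - v) * x₂ by ring]
  ring

theorem chi_neg (a : ℤ) : chi K (-a) = -chi K a := by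
  simp only [chi]
  rcases (by omega : a % 3 = 0 ∨ a % 3 = 1 ∨ a % 3 = 2) with h | h | h
  · rw [h, show -a % 3 = 0 by omega]; simp
  · rw [h, show -a % 3 = 2 by omega]; simp
  · rw [h, show -a % 3 = 1 by omega]; simp

theorem chi_congr {a b : ℤ} (h : a % 3 = b % 3) : chi K a = chi K b := by rw [chi, chi, h]

/-- A sum vanishes when a symmetry of its index set changes the sign of its terms. -/
theorem finsum_antisymm [CharZero K] {ι : Type*} {f : ι → K} (e : ι ≃ ι)
    (h : ∀ u, f (e u) = -f u) : ∑ᶠ u, f u = 0 := by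
  have : ∑ᶠ u, f u = -∑ᶠ u, f u := by
    conv_lhs => rw [← finsum_comp_equiv e]
    rw [← finsum_neg_distrib]
    exact finsum_congr h
  exact self_eq_neg.mp this

variable (h0 : q ≠ 0) (hq : ∀ n : ℕ, 0 < n → q ^ n ≠ 1)
include h0 hq

/-- Boundary condition at the wall `x₁ = x₀ + 1`: the difference of the two sides changes sign
under the reflection exchanging `u₀` and `u₁`. This eliminates parameters outside the seven
profiles. -/
theorem bb_wall₀₁ [CharZero K] (a b N : ℤ) :
    bb q a (a + 1) b N = q ^ N * bb q (a + 1) (a + 1) b N := by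
  have hs : Function.HasFiniteSupport fun u => q ^ N * bt q N (a + 1) (a + 1) b u :=
    Set.Finite.subset (bt_fin N (a + 1) (a + 1) b) fun n hn => right_ne_zero_of_mul hn
  rw [← sub_eq_zero, bb, bb, mul_finsum, ← finsum_sub_distrib (bt_fin ..) hs]
  refine finsum_antisymm (Equiv.prodComm ℤ ℤ) ?_
  have key (u v : ℤ) : bt q N a (a + 1) b (u, v) - q ^ N * bt q N (a + 1) (a + 1) b (u, v) =
      chi K (v - u) * (q ^ (EE u v + v + (u + v) * a - a - 1 + (1 - u - v) * b) *
        (ip q (N + u - 1) * ip q (N + v - 1) * ip q (N + (1 - u - v)))) := by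
    rw [ip_step hq, bt, bt]
    simp only
    have e : q ^ (EE u v + u * (a + 1) + (v - 1) * (a + 1) + (1 - u - v) * b) * q ^ N =
        q ^ (EE u v + v + (u + v) * a - a - 1 + (1 - u - v) * b) * q ^ (N + u) := by
      rw [← zpow_add₀ h0, ← zpow_add₀ h0]; congr 1; ring
    rw [show EE u v + u * a + (v - 1) * (a + 1) + (1 - u - v) * b =
      EE u v + v + (u + v) * a - a - 1 + (1 - u - v) * b by ring,
      show N + (v - 1) = N + v - 1 by ring]
    linear_combination -chi K (v - u) * (ip q (N + u) * ip q (N + v - 1) *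
      ip q (N + (1 - u - v))) * e
  rintro ⟨u, v⟩
  rw [Equiv.prodComm_apply, Prod.swap_prod_mk, key, key, ← neg_sub v u, chi_neg]
  have : EE v u + u = EE u v + v := by
    rw [EE, EE, show v ^ 2 + u ^ 2 + (3 - v - u) ^ 2 = u ^ 2 + v ^ 2 + (3 - u - v) ^ 2 by ring]
    ring
  rw [this, add_comm v u, show 1 - v - u = 1 - u - v by ring]
  ring

/-- Boundary condition at the wall `x₂ = x₁ + 1`, by the reflection exchanging `u₁` and `u₂`. -/
theorem bb_wall₁₂ [CharZero K] (a b N : ℤ) :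
    bb q a b (b + 1) N = q ^ N * bb q a (b + 1) (b + 1) N := by
  have hs : Function.HasFiniteSupport fun u => q ^ N * bt q N a (b + 1) (b + 1) u :=
    Set.Finite.subset (bt_fin N a (b + 1) (b + 1)) fun n hn => right_ne_zero_of_mul hn
  rw [← sub_eq_zero, bb, bb, mul_finsum, ← finsum_sub_distrib (bt_fin ..) hs]
  let e : ℤ × ℤ ≃ ℤ × ℤ :=
    { toFun := fun u => (u.1, 3 - u.1 - u.2)
      invFun := fun u => (u.1, 3 - u.1 - u.2)
      left_inv := fun u => Prod.ext rfl (by ring)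
      right_inv := fun u => Prod.ext rfl (by ring) }
  refine finsum_antisymm e ?_
  have key (u v : ℤ) : bt q N a b (b + 1) (u, v) - q ^ N * bt q N a (b + 1) (b + 1) (u, v) =
      chi K (v - u) * (q ^ (EE u v + u * a - u * b + 1 - u - v) *
        (ip q (N + u) * ip q (N + (v - 1) - 1) * ip q (N + (1 - u - v)))) := by
    rw [ip_step hq, bt, bt]
    simp only
    have e : q ^ (EE u v + u * a + (v - 1) * (b + 1) + (1 - u - v) * (b + 1)) * q ^ N =
        q ^ (EE u v + u * a - u * b + 1 - u - v) * q ^ (N + (v - 1)) := by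
      rw [← zpow_add₀ h0, ← zpow_add₀ h0]; congr 1; ring
    rw [show EE u v + u * a + (v - 1) * b + (1 - u - v) * (b + 1) =
      EE u v + u * a - u * b + 1 - u - v by ring]
    linear_combination -chi K (v - u) * (ip q (N + u) * ip q (N + (v - 1)) *
      ip q (N + (1 - u - v))) * e
  rintro ⟨u, v⟩
  simp only [e, Equiv.coe_fn_mk]
  rw [key, key, chi_congr (a := 3 - u - v - u) (b := -(v - u)) (by omega), chi_neg]
  have : EE u (3 - u - v) + u * a - u * b + 1 - u - (3 - u - v) =
      EE u v + u * a - u * b + 1 - u - v := by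
    rw [EE, EE, show u ^ 2 + (3 - u - v) ^ 2 + (3 - u - (3 - u - v)) ^ 2 =
      u ^ 2 + v ^ 2 + (3 - u - v) ^ 2 by ring]
    ring
  rw [this, show N + (3 - u - v - 1) - 1 = N + (1 - u - v) by ring,
    show N + (1 - u - (3 - u - v)) = N + (v - 1) - 1 by ring]
  ring

/-- Expanding the product `∏ᵢ (1 - q ^ (N + sᵢ))` that relates the denominators at `N - 1` and
`N`. The factors `q ^ sᵢ` shift `xᵢ` by one. -/
theorem bb_rec (x₀ x₁ x₂ N : ℤ) :
    bb q x₀ x₁ x₂ (N - 1) = bb q x₀ x₁ x₂ N -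
      q ^ N * (bb q (x₀ + 1) x₁ x₂ N + bb q x₀ (x₁ + 1) x₂ N + bb q x₀ x₁ (x₂ + 1) N) +
      (q ^ N) ^ 2 * (bb q (x₀ + 1) (x₁ + 1) x₂ N + bb q (x₀ + 1) x₁ (x₂ + 1) N +
        bb q x₀ (x₁ + 1) (x₂ + 1) N) - (q ^ N) ^ 3 * bb q x₀ x₁ x₂ N := by
  obtain ⟨S, hS⟩ : ∃ S : Finset (ℤ × ℤ), ∀ M ∈ ({N, N - 1} : Finset ℤ), ∀ y₀ y₁ y₂,
      Function.support (bt q M y₀ y₁ y₂) ⊆ ↑S := by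
    refine ⟨Finset.Icc ((-N, 1 - N) : ℤ × ℤ) (2 * N, 2 * N + 1) ∪
      Finset.Icc ((-(N - 1), 1 - (N - 1)) : ℤ × ℤ) (2 * (N - 1), 2 * (N - 1) + 1), ?_⟩
    intro M hM y₀ y₁ y₂
    rw [Finset.coe_union]
    rw [Finset.mem_insert, Finset.mem_singleton] at hM
    rcases hM with rfl | rfl
    · exact (bt_support ..).trans Set.subset_union_left
    · exact (bt_support ..).trans Set.subset_union_right
  have h1 (y₀ y₁ y₂) := finsum_eq_sum_of_support_subset _ (hS N (by simp) y₀ y₁ y₂)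
  have h2 (y₀ y₁ y₂) := finsum_eq_sum_of_support_subset _ (hS (N - 1) (by simp) y₀ y₁ y₂)
  simp only [bb, h1, h2, Finset.mul_sum, ← Finset.sum_add_distrib, ← Finset.sum_sub_distrib]
  refine Finset.sum_congr rfl fun ⟨u, v⟩ _ => ?_
  have e1 := ip_step hq (N + u)
  have e2 := ip_step hq (N + (v - 1))
  have e3 := ip_step hq (N + (1 - u - v))
  rw [show N + u - 1 = N - 1 + u by ring] at e1
  rw [show N + (v - 1) - 1 = N - 1 + (v - 1) by ring] at e2
  rw [show N + (1 - u - v) - 1 = N - 1 + (1 - u - v) by ring] at e3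
  simp only [bt, e1, e2, e3, mul_add, mul_one, zpow_add₀ h0]
  have h : q ^ u * q ^ (v - 1) * q ^ (1 - u - v) = 1 := by
    rw [← zpow_add₀ h0, ← zpow_add₀ h0, show u + (v - 1) + (1 - u - v) = 0 by ring, zpow_zero]
  generalize q ^ u = A at *
  generalize q ^ (v - 1) = B at *
  generalize q ^ (1 - u - v) = C at *
  linear_combination -(chi K (v - u)) * q ^ EE u v * q ^ (u * x₀) * q ^ ((v - 1) * x₁) *
    q ^ ((1 - u - v) * x₂) * (ip q (N + u) * ip q (N + (v - 1)) * ip q (N + (1 - u - v))) *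
    (q ^ N) ^ 3 * h

/-- The bosonic sums solve the system: the boundary conditions and the symmetries turn `bb_rec`
into a system that closes on the seven profiles. -/
theorem sol_bos [CharZero K] : Sol q fun c N =>
    (![bb q 0 0 0 N, bb q 1 0 0 N, bb q 1 1 0 N, bb q 2 0 0 N, bb q 2 1 0 N, bb q 2 2 0 N,
      bb q 3 1 0 N] : Fin 7 → K) c := by
  have t := bb_translate (q := q)
  have r := bb_rotate (q := q)
  have w₁ := bb_wall₀₁ h0 hq
  have w₂ := bb_wall₁₂ h0 hq
  have R := bb_rec h0 hq
  -- reduction of all parameters to the seven chosen ones, `t` by symmetry and `c` by the walls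
  have t0 (N) : bb q 1 1 1 N = bb q 0 0 0 N := t 0 0 0 N
  have t1 (N) : bb q 2 1 1 N = bb q 1 0 0 N := t 1 0 0 N
  have t2 (N) : bb q 2 2 1 N = bb q 1 1 0 N := t 1 1 0 N
  have t3 (N) : bb q 3 1 1 N = bb q 2 0 0 N := t 2 0 0 N
  have t4 (N) : bb q 3 2 1 N = bb q 2 1 0 N := t 2 1 0 N
  have t5 (N) : bb q 3 0 0 N = bb q 2 2 0 N := by
    rw [r, ← t, ← t]; rfl
  have t6 (N) : bb q 4 1 1 N = bb q 2 2 0 N := (t 3 0 0 N).trans (t5 N)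
  have t8 (N) : bb q 4 1 0 N = bb q 2 1 0 N := by
    rw [r, ← t]; rfl
  have t9 (N) : bb q 4 2 0 N = bb q 3 1 0 N := by
    rw [r, ← t]; rfl
  have t7 (N) : bb q 3 2 0 N = bb q 3 1 0 N := by
    rw [r, ← t, ← t, ← t9]; rfl
  have c0 (N) : bb q 0 1 0 N = q ^ N * bb q 1 1 0 N := w₁ 0 0 N
  have c2 (N) : bb q 1 0 1 N = q ^ N * bb q 0 0 0 N := (w₂ 1 0 N).trans (by rw [← t0]; rfl)
  have c3 (N) : bb q 2 0 1 N = q ^ N * bb q 1 0 0 N := (w₂ 2 0 N).trans (by rw [← t1]; rfl)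
  have c4 (N) : bb q 1 2 0 N = q ^ N * bb q 2 2 0 N := w₁ 1 0 N
  have c5 (N) : bb q 1 2 1 N = q ^ N * bb q 1 1 0 N := (w₁ 1 1 N).trans (by rw [← t2]; rfl)
  have c6 (N) : bb q 3 0 1 N = q ^ N * bb q 2 0 0 N := (w₂ 3 0 N).trans (by rw [← t3]; rfl)
  have c7 (N) : bb q 2 3 0 N = q ^ N * bb q 3 3 0 N := w₁ 2 0 N
  have c8 (N) : bb q 2 3 1 N = q ^ N * bb q 2 2 0 N :=
    (w₁ 2 1 N).trans (by rw [← t 2 2 0]; rfl)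
  have c9 (N) : bb q 0 1 1 N = q ^ N * bb q 0 0 0 N := (w₁ 0 1 N).trans (by rw [← t0]; rfl)
  have c1 (N) : bb q 0 0 1 N = q ^ N * (q ^ N * bb q 0 0 0 N) :=
    (w₂ 0 0 N).trans (by rw [← c9]; rfl)
  have R0 (N) := R 0 0 0 N
  have R1 (N) := R 1 0 0 N
  have R2 (N) := R 1 1 0 N
  have R3 (N) := R 2 0 0 N
  have R4 (N) := R 2 1 0 N
  have R5 (N) := R 2 2 0 N
  have R6 (N) := R 3 1 0 N
  norm_num [t0, t1, t2, t3, t4, t5, t6, t7, t8, t9, c0, c1, c2, c3, c4, c5, c6, c7, c8, c9]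
    at R0 R1 R2 R3 R4 R5 R6
  constructor
  · intro c; fin_cases c <;> exact bb_zero ..
  all_goals
    intro N
    simp
  · linear_combination R0 N
  · linear_combination R1 N
  · linear_combination R2 N
  · linear_combination R3 N
  · linear_combination R4 N + q ^ N * R5 N
  · linear_combination R5 N
  · linear_combination R6 N + q ^ N * R3 N

end bos

/-! ### The finite Jacobi triple product -/

section jtp

variable {K : Type*} [Field K] {p x : K}

/-- Summand of the finite Jacobi triple product. -/
def jt (p x : K) (N j : ℤ) : K :=
  x ^ j * p ^ (j * (j - 1) / 2) * (ip p (N + j) * ip p (N - j))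

theorem jt_support (N : ℤ) : Function.support (jt p x N) ⊆ ↑(Finset.Icc (-N) N) := by
  intro j hj
  simp only [Function.mem_support, jt, ne_eq, mul_eq_zero, not_or] at hj
  have h1 := ip_ne_zero_imp hj.2.1
  have h2 := ip_ne_zero_imp hj.2.2
  rw [Finset.coe_Icc, Set.mem_Icc]
  omega

theorem tri_succ (j : ℤ) : (j + 1) * (j + 1 - 1) / 2 = j * (j - 1) / 2 + j := by
  rw [show (j + 1) * (j + 1 - 1) = j * (j - 1) + j * 2 by ring,
    Int.add_mul_ediv_right _ _ (by norm_num)]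

theorem jt_zero : ∑ᶠ j, jt p x 0 j = 1 := by
  rw [finsum_eq_sum_of_support_subset _ (jt_support 0), neg_zero, Finset.Icc_self,
    Finset.sum_singleton]
  simp [jt, ip_zero]

variable (h0 : p ≠ 0) (hx : x ≠ 0) (hp : ∀ n : ℕ, 0 < n → p ^ n ≠ 1)
include h0 hx hp

/-- The ratio of consecutive finite sums; with it, the product formula follows by induction. -/
theorem jt_step (N : ℤ) :
    (1 - p ^ (2 * N + 1)) * (1 - p ^ (2 * N + 2)) * ∑ᶠ j, jt p x (N + 1) j =
      (1 + x * p ^ N) * (1 + p ^ (N + 1) * x⁻¹) * ∑ᶠ j, jt p x N j := by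
  have e1 : ∑ᶠ j, jt p x N j = ∑ᶠ j, jt p x N (j - 1) :=
    (finsum_comp_equiv (Equiv.subRight (1 : ℤ))).symm
  have e2 : ∑ᶠ j, jt p x N j = ∑ᶠ j, jt p x N (j + 1) :=
    (finsum_comp_equiv (Equiv.addRight (1 : ℤ))).symm
  have e3 : (1 + x * p ^ N) * (1 + p ^ (N + 1) * x⁻¹) * ∑ᶠ j, jt p x N j =
      (1 + p ^ (2 * N + 1)) * (∑ᶠ j, jt p x N j) + x * p ^ N * (∑ᶠ j, jt p x N (j - 1)) +
        p ^ (N + 1) * x⁻¹ * ∑ᶠ j, jt p x N (j + 1) := by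
    have : p ^ (2 * N + 1) = p ^ N * p ^ (N + 1) := by rw [← zpow_add₀ h0]; congr 1; ring
    rw [← e1, ← e2, this]
    field_simp
    ring
  obtain ⟨S, hS⟩ : ∃ S : Finset ℤ, S = Finset.Icc (-(N + 1)) (N + 1) := ⟨_, rfl⟩
  have s1 : Function.support (jt p x (N + 1)) ⊆ ↑S := hS ▸ jt_support _
  have s2 : Function.support (jt p x N) ⊆ ↑S := fun j hj => by
    have := jt_support _ hj
    rw [Finset.coe_Icc, Set.mem_Icc] at this
    rw [hS, Finset.coe_Icc, Set.mem_Icc]; omega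
  have s3 : Function.support (fun j => jt p x N (j - 1)) ⊆ ↑S := fun j hj => by
    have := jt_support N (Function.mem_support.mpr (Function.mem_support.mp hj))
    rw [Finset.coe_Icc, Set.mem_Icc] at this
    rw [hS, Finset.coe_Icc, Set.mem_Icc]; omega
  have s4 : Function.support (fun j => jt p x N (j + 1)) ⊆ ↑S := fun j hj => by
    have := jt_support N (Function.mem_support.mpr (Function.mem_support.mp hj))
    rw [Finset.coe_Icc, Set.mem_Icc] at this
    rw [hS, Finset.coe_Icc, Set.mem_Icc]; omega
  rw [e3, finsum_eq_sum_of_support_subset _ s1, finsum_eq_sum_of_support_subset _ s2,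
    finsum_eq_sum_of_support_subset _ s3, finsum_eq_sum_of_support_subset _ s4]
  simp only [Finset.mul_sum, ← Finset.sum_add_distrib]
  refine Finset.sum_congr rfl fun j _ => ?_
  -- all terms are rational multiples of `1 / ((p;p)_{N + 1 + j} (p;p)_{N + 1 - j})`
  have t1 : (j - 1) * (j - 1 - 1) / 2 = j * (j - 1) / 2 - (j - 1) := by
    have := tri_succ (j - 1)
    rw [sub_add_cancel] at this
    omega
  have i1 := ip_step hp (N + 1 + j)
  have i2 := ip_step hp (N + 1 - j)
  have i3 := ip_step hp (N + j)
  have i4 := ip_step hp (N - j)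
  rw [show N + 1 + j - 1 = N + j by ring] at i1
  rw [show N + 1 - j - 1 = N - j by ring] at i2
  rw [jt, jt, jt, jt, t1, tri_succ, show N + (j - 1) = N + j - 1 by ring,
    show N - (j - 1) = N + 1 - j by ring, show N + (j + 1) = N + 1 + j by ring,
    show N - (j + 1) = N - j - 1 by ring, i3, i4, i1, i2, zpow_sub₀ hx, zpow_add₀ hx]
  generalize ip p (N + 1 + j) = a
  generalize ip p (N + 1 - j) = b
  have z1 : p ^ (2 * N + 1) = (p ^ N) ^ 2 * p := by
    rw [zpow_add₀ h0, zpow_one, mul_comm 2 N, zpow_mul, zpow_ofNat]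
  have z2 : p ^ (2 * N + 2) = (p ^ N) ^ 2 * p ^ 2 := by
    rw [zpow_add₀ h0, mul_comm 2 N, zpow_mul, zpow_ofNat, zpow_ofNat]
  rw [z1, z2]
  simp only [zpow_add₀ h0, zpow_sub₀ h0, zpow_one]
  have := zpow_ne_zero j h0
  generalize p ^ (j * (j - 1) / 2) = T
  generalize p ^ j = A at *
  generalize p ^ N = Y
  field_simp
  ring

/-- Finite Jacobi triple product. -/
theorem jt_prod (N : ℕ) :
    pf p (2 * N) * ∑ᶠ j, jt p x N j =
      ∏ n ∈ Finset.range N, ((1 + x * p ^ n) * (1 + p ^ (n + 1) * x⁻¹)) := by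
  induction N with
  | zero => simp [pf_zero, jt_zero]
  | succ N ih =>
    have e := jt_step h0 hx hp (N : ℤ)
    have f1 := pf_succ (q := p) (m := 2 * N) (by positivity)
    have f2 := pf_succ (q := p) (m := 2 * N + 1) (by positivity)
    have z : p ^ ((N : ℤ) + 1) = p ^ (N + 1) := by rw [← zpow_natCast]; rfl
    rw [show (2 * N + 1 + 1 : ℤ) = 2 * N + 2 by ring] at f2
    rw [z, zpow_natCast] at e
    rw [Finset.prod_range_succ, ← ih, Nat.cast_succ, show 2 * ((N : ℤ) + 1) = 2 * N + 2 by ring,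
      f2, f1]
    linear_combination pf p (2 * N) * e

end jtp

/-! ### Limits, sums and products of formal power series -/

open PowerSeries Filter Topology

instance : T2Space (PowerSeries ℚ) := PowerSeries.WithPiTopology.instT2Space ℚ
instance : IsTopologicalRing (PowerSeries ℚ) := PowerSeries.WithPiTopology.instIsTopologicalRing ℚ

theorem tendsto_iff' {ι : Type*} {f : ι → ℚ⟦X⟧} {u : Filter ι} {g : ℚ⟦X⟧} :
    Tendsto f u (𝓝 g) ↔ ∀ d, Tendsto (fun i => coeff d (f i)) u (𝓝 (coeff d g)) :=
  PowerSeries.WithPiTopology.tendsto_iff_coeff_tendsto ℚ f u g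

section sums

variable {ι : Type*} {g : ι → ℚ⟦X⟧} {e : ι → ℕ}

theorem summable_of_dvd (he : Tendsto e cofinite atTop) (hd : ∀ i, X ^ e i ∣ g i) : Summable g := by
  refine (PowerSeries.WithPiTopology.summable_iff_summable_coeff ℚ).mpr fun d => ?_
  refine summable_of_hasFiniteSupport ?_
  have : ∀ᶠ i in cofinite, coeff d (g i) = 0 := by
    filter_upwards [he.eventually_gt_atTop d] with i hi
    exact X_pow_dvd_iff.mp (hd i) d hi
  exact this

/-- Termwise passage to the limit (Tannery's theorem) for formal power series. -/
theorem tannery (he : Tendsto e cofinite atTop) (hd : ∀ i, X ^ e i ∣ g i)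
    {w : ℕ → ι → ℚ⟦X⟧} (hw : ∀ i m, ∀ᶠ N in atTop, X ^ m ∣ w N i - 1)
    {S : ℕ → Finset ι} (hS : ∀ N, ∀ i ∉ S N, g i * w N i = 0) :
    Tendsto (fun N => ∑ i ∈ S N, g i * w N i) atTop (𝓝 (∑' i, g i)) := by
  refine tendsto_iff'.mpr fun d => tendsto_const_nhds.congr' ?_
  have hfin : {i | ¬ d < e i}.Finite := he.eventually_gt_atTop d
  have h1 : coeff d (∑' i, g i) = ∑ i ∈ hfin.toFinset, coeff d (g i) := by
    rw [← ((PowerSeries.WithPiTopology.hasSum_iff_hasSum_coeff ℚ).mp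
      (summable_of_dvd he hd).hasSum d).tsum_eq]
    refine tsum_eq_sum fun i hi => X_pow_dvd_iff.mp (hd i) d ?_
    simpa using hi
  have h2 : ∀ᶠ N in atTop, ∀ i ∈ hfin.toFinset, X ^ (d + 1) ∣ w N i - 1 :=
    (hfin.toFinset.eventually_all).mpr fun i _ => hw i (d + 1)
  filter_upwards [h2] with N hN
  rw [h1, map_sum]
  have h3 : ∀ i ∈ hfin.toFinset, coeff d (g i) = coeff d (g i * w N i) := fun i hi => by
    have := X_pow_dvd_iff.mp ((hN i hi).mul_left (g i)) d d.lt_succ_self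
    rw [mul_sub, mul_one, map_sub, sub_eq_zero] at this
    exact this.symm
  rw [Finset.sum_congr rfl h3]
  classical
  refine (Finset.sum_subset (Finset.subset_union_left (s₂ := S N)) fun i _ hi => ?_).trans
    (Finset.sum_subset (Finset.subset_union_right (s₁ := hfin.toFinset)) fun i _ hi => ?_).symm
  · refine X_pow_dvd_iff.mp ((hd i).mul_right _) d ?_
    simpa using hi
  · rw [hS N i hi, map_zero]

end sums

section prods

/-- Sequences of factors whose infinite product converges. -/
def Adm (a : ℕ → ℚ⟦X⟧) : Prop := ∀ k, X ^ (k + 1) ∣ a k - 1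

theorem Adm.mul {a b : ℕ → ℚ⟦X⟧} (ha : Adm a) (hb : Adm b) : Adm fun k => a k * b k := fun k => by
  have : a k * b k - 1 = a k * (b k - 1) + (a k - 1) := by ring
  rw [this]
  exact dvd_add ((hb k).mul_left _) (ha k)

theorem Adm.one_add {a : ℕ → ℚ⟦X⟧} (ha : ∀ k, X ^ (k + 1) ∣ a k) : Adm fun k => 1 + a k :=
  fun k => by simpa using ha k

theorem Adm.one_sub {a : ℕ → ℚ⟦X⟧} (ha : ∀ k, X ^ (k + 1) ∣ a k) : Adm fun k => 1 - a k :=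
  fun k => by simpa using ha k

theorem Adm.pow {a : ℕ → ℚ⟦X⟧} (ha : Adm a) (n : ℕ) : Adm fun k => a k ^ n := fun k =>
  (ha k).trans (by simpa using sub_dvd_pow_sub_pow (a k) 1 n)

theorem Adm.multipliable {a : ℕ → ℚ⟦X⟧} (ha : Adm a) : Multipliable a := by
  have := PowerSeries.WithPiTopology.multipliable_one_add_of_tendsto_order_atTop_nhds_top ℚ
    (f := fun k => a k - 1) ?_
  · simp only [add_sub_cancel] at this
    exact this
  · rw [ENat.tendsto_nhds_top_iff_natCast_lt]
    intro n
    filter_upwards [eventually_ge_atTop n] with k hk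
    refine lt_of_lt_of_le ?_ (nat_le_order _ (k + 1) (X_pow_dvd_iff.mp (ha k)))
    exact_mod_cast Nat.lt_succ_of_le hk

theorem Adm.tendsto {a : ℕ → ℚ⟦X⟧} (ha : Adm a) :
    Tendsto (fun n => ∏ k ∈ Finset.range n, a k) atTop (𝓝 (∏' k, a k)) :=
  ha.multipliable.hasProd.tendsto_prod_nat

theorem Adm.tprod_mul {a b : ℕ → ℚ⟦X⟧} (ha : Adm a) (hb : Adm b) :
    ∏' k, a k * b k = (∏' k, a k) * ∏' k, b k :=
  ha.multipliable.tprod_mul hb.multipliable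

/-- Grouping the factors of an infinite product into blocks of length `d`. -/
theorem Adm.tprod_block {a : ℕ → ℚ⟦X⟧} (ha : Adm a) {d : ℕ} (hd : 0 < d)
    (hb : Adm fun k => ∏ j ∈ Finset.range d, a (d * k + j)) :
    ∏' k, ∏ j ∈ Finset.range d, a (d * k + j) = ∏' k, a k := by
  refine tendsto_nhds_unique hb.tendsto ?_
  have : (fun n => ∏ k ∈ Finset.range n, ∏ j ∈ Finset.range d, a (d * k + j)) =
      fun n => ∏ k ∈ Finset.range (d * n), a k := by
    funext n
    induction n with
    | zero => simp
    | succ n ih => rw [Finset.prod_range_succ, ih, Nat.mul_succ, Finset.prod_range_add]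
  rw [this]
  exact ha.tendsto.comp (tendsto_id.const_mul_atTop' hd)

end prods

/-! ### From power series to Laurent series -/

section

variable {p : ℚ⟦X⟧}

/-- The finite product `(p;p)_n` as a power series. -/
noncomputable def pr (p : ℚ⟦X⟧) (n : ℕ) : ℚ⟦X⟧ := ∏ k ∈ Finset.range n, (1 - p ^ (k + 1))

/-- `1 / (p;p)_m` as a power series, with value `0` for `m < 0`. -/
noncomputable def ir (p : ℚ⟦X⟧) (m : ℤ) : ℚ⟦X⟧ := if 0 ≤ m then (pr p m.toNat)⁻¹ else 0

theorem ir_neg {m : ℤ} (h : m < 0) : ir p m = 0 := by rw [ir, if_neg (not_le.mpr h)]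

theorem pr_mul_ir (hp : X ∣ p) {m : ℕ} : pr p m * ir p m = 1 := by
  rw [ir, if_pos (by positivity), Int.toNat_natCast]
  refine PowerSeries.mul_inv_cancel _ ?_
  rw [pr, map_prod, Finset.prod_ne_zero_iff]
  intro k _
  rw [X_dvd_iff] at hp
  simp [hp]

theorem pr_dvd (hp : X ∣ p) {m n k : ℕ} (h₁ : k ≤ m) (h₂ : k ≤ n) :
    X ^ k ∣ pr p m - pr p n := by
  have key (j : ℕ) : X ^ k ∣ pr p (k + j) - pr p k := by
    induction j with
    | zero => simp
    | succ j ih =>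
      rw [← add_assoc, pr, Finset.prod_range_succ, ← pr]
      have : pr p (k + j) * (1 - p ^ (k + j + 1)) - pr p k =
        pr p (k + j) - pr p k - p ^ k * (p ^ (j + 1) * pr p (k + j)) := by ring
      rw [this]
      exact dvd_sub ih ((pow_dvd_pow_of_dvd hp k).mul_right _)
  obtain ⟨i, rfl⟩ := Nat.exists_eq_add_of_le h₁
  obtain ⟨j, rfl⟩ := Nat.exists_eq_add_of_le h₂
  simpa using dvd_sub (key i) (key j)

/-- `(p;p)_N / (p;p)_{N + s}` tends to `1`. -/
theorem wt_dvd (hp : X ∣ p) (s : ℤ) (m : ℕ) :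
    ∀ᶠ N : ℕ in atTop, X ^ m ∣ pr p N * ir p (N + s) - 1 := by
  filter_upwards [eventually_ge_atTop (m + s.natAbs)] with N hN
  obtain ⟨M, hM⟩ := Int.eq_ofNat_of_zero_le (a := N + s) (by omega)
  have : pr p N * ir p M - 1 = (pr p N - pr p M) * ir p M := by rw [sub_mul, pr_mul_ir hp]
  rw [hM, this]
  exact (pr_dvd hp (by omega) (by omega)).mul_right _

theorem dvd_mul_sub_one {x a b : ℚ⟦X⟧} (ha : x ∣ a - 1) (hb : x ∣ b - 1) : x ∣ a * b - 1 := by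
  have : a * b - 1 = a * (b - 1) + (a - 1) := by ring
  rw [this]
  exact dvd_add (hb.mul_left _) ha

theorem adm_pr (hp : X ∣ p) : Adm fun k => 1 - p ^ (k + 1) :=
  Adm.one_sub fun k => pow_dvd_pow_of_dvd hp (k + 1)

theorem pr_tendsto (hp : X ∣ p) : Tendsto (pr p) atTop (𝓝 (∏' k, (1 - p ^ (k + 1)))) :=
  (adm_pr hp).tendsto

theorem Adm.constantCoeff {a : ℕ → ℚ⟦X⟧} (ha : Adm a) :
    PowerSeries.constantCoeff (∏' k, a k) = 1 := by
  have h := (tendsto_iff'.mp ha.tendsto) 0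
  rw [coeff_zero_eq_constantCoeff_apply] at h
  refine tendsto_nhds_unique h (tendsto_const_nhds.congr fun n => ?_)
  rw [coeff_zero_eq_constantCoeff_apply, map_prod, Finset.prod_eq_one]
  intro k _
  have := X_pow_dvd_iff.mp (ha k) 0 k.succ_pos
  rw [coeff_zero_eq_constantCoeff_apply, map_sub, map_one, sub_eq_zero] at this
  exact this

theorem Adm.ne_zero {a : ℕ → ℚ⟦X⟧} (ha : Adm a) : ∏' k, a k ≠ 0 := fun h => by
  have := ha.constantCoeff
  rw [h, map_zero] at this
  exact zero_ne_one this

/-- The embedding of power series into Laurent series. -/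
noncomputable abbrev toL : ℚ⟦X⟧ →+* LaurentSeries ℚ := HahnSeries.ofPowerSeries ℤ ℚ

theorem toL_inj : Function.Injective toL := HahnSeries.ofPowerSeries_injective

theorem toL_pr (n : ℕ) : toL (pr p n) = pf (toL p) n := by
  simp [pr, pf]

theorem toL_ir (hp : X ∣ p) (m : ℤ) : toL (ir p m) = ip (toL p) m := by
  rcases lt_or_ge m 0 with h | h
  · rw [ir_neg h, ip_neg h, map_zero]
  · lift m to ℕ using h
    have := congrArg toL (pr_mul_ir hp (m := m))
    rw [map_mul, toL_pr, map_one] at this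
    rw [ip, eq_inv_of_mul_eq_one_right this]

theorem toL_pow_ne_one (hp : X ∣ p) (n : ℕ) (hn : 0 < n) : toL p ^ n ≠ 1 := by
  intro h
  rw [← map_pow, ← map_one toL] at h
  have := congrArg PowerSeries.constantCoeff (toL_inj h)
  rw [map_pow, X_dvd_iff.mp hp, zero_pow hn.ne', map_one] at this
  exact zero_ne_one this

theorem toL_monomial (n : ℕ) (r : ℚ) : toL (monomial n r) = HahnSeries.single (n : ℤ) r := by
  have : monomial n r = C r * X ^ n := by
    rw [X_pow_eq, ← monomial_zero_eq_C_apply, monomial_mul_monomial, zero_add, mul_one]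
  rw [this, map_mul, HahnSeries.ofPowerSeries_C, HahnSeries.ofPowerSeries_X_pow,
    HahnSeries.C_apply, HahnSeries.single_mul_single, zero_add, mul_one]

theorem single_zpow' (a : ℤ) (r : ℚ) (j : ℤ) :
    (HahnSeries.single a r : LaurentSeries ℚ) ^ j = HahnSeries.single (j * a) (r ^ j) := by
  cases j with
  | ofNat n => simp [HahnSeries.single_pow]
  | negSucc n =>
    rw [zpow_negSucc, zpow_negSucc, HahnSeries.single_pow, HahnSeries.inv_single]
    congr 1
    rw [Int.negSucc_eq]; simp; congr 1; ring

end

/-! ### The Jacobi triple product -/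

/-- Exponent in the theta series `∑ⱼ X ^ (c j + d j (j - 1) / 2)`. -/
def te (c d : ℕ) (j : ℤ) : ℤ := c * j + d * (j * (j - 1) / 2)

/-- Term of the theta series. -/
noncomputable def th (c d : ℕ) (δ ε : ℚ) (j : ℤ) : ℚ⟦X⟧ :=
  monomial (te c d j).toNat (δ ^ j * ε ^ (j * (j - 1) / 2))

theorem two_tri (j : ℤ) : 2 * (j * (j - 1) / 2) = j * (j - 1) :=
  Int.mul_ediv_cancel' (Int.even_mul_pred_self j).two_dvd

theorem te_ge {c d : ℕ} (hc : 0 < c) (hd : c < d) (j : ℤ) : |j| ≤ te c d j := by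
  have h := two_tri j
  rw [te]
  generalize j * (j - 1) / 2 = t at *
  have hc' : (1 : ℤ) ≤ c := by exact_mod_cast hc
  have hd' : (c : ℤ) + 1 ≤ d := by exact_mod_cast hd
  rcases lt_or_ge 0 j with hj | hj
  · rw [abs_of_pos hj]
    have : 0 ≤ t := by nlinarith
    nlinarith
  · rw [abs_of_nonpos hj]
    have : -j ≤ t := by
      rcases hj.eq_or_lt with rfl | hj
      · omega
      · nlinarith
    nlinarith

theorem monomial_dvd {k n : ℕ} (h : k ≤ n) (r : ℚ) : X ^ k ∣ monomial n r := by
  rw [X_pow_dvd_iff]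
  intro m hm
  rw [coeff_monomial, if_neg (by omega)]

theorem te_tendsto {c d : ℕ} (hc : 0 < c) (hd : c < d) :
    Tendsto (fun j => (te c d j).toNat) cofinite atTop := by
  refine tendsto_atTop.mpr fun n => ?_
  refine (Set.finite_Icc (-n : ℤ) n).subset fun j hj => ?_
  have := te_ge hc hd j
  simp only [Set.mem_compl_iff, Set.mem_ofPred_eq, not_le] at hj
  rw [Set.mem_Icc]
  have := abs_le.mp (this.trans (by omega : te c d j ≤ n))
  exact this

section

variable {c d : ℕ} (hc : 0 < c) (hd : c < d) {δ ε : ℚ} (hδ : δ * δ = 1) (hε : ε * ε = 1)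
include hc hd

theorem th_summable (δ ε : ℚ) : Summable (th c d δ ε) :=
  summable_of_dvd (te_tendsto hc hd) fun _ => monomial_dvd le_rfl _

include hδ hε

/-- Jacobi triple product, with base `ε X ^ d` and argument `δ X ^ c`, where `δ, ε = ±1`. -/
theorem jtp :
    ∑' j, th c d δ ε j = (∏' k, (1 - monomial d ε ^ (k + 1))) *
      ∏' n, ((1 + monomial (c + n * d) (δ * ε ^ n)) *
        (1 + monomial ((n + 1) * d - c) (ε ^ (n + 1) * δ))) := by
  set p : ℚ⟦X⟧ := monomial d ε with hp
  have hδ0 : δ ≠ 0 := left_ne_zero_of_mul_eq_one hδ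
  have hε0 : ε ≠ 0 := left_ne_zero_of_mul_eq_one hε
  have hX : X ∣ p := by simpa using monomial_dvd (k := 1) (n := d) (by omega) ε
  have iop : toL p = HahnSeries.single (d : ℤ) ε := toL_monomial ..
  have p0 : toL p ≠ 0 := by rw [iop]; simpa
  have x0 : (HahnSeries.single (c : ℤ) δ : LaurentSeries ℚ) ≠ 0 := by simpa
  have hT := tannery (te_tendsto hc hd) (g := th c d δ ε) (fun _ => monomial_dvd le_rfl _)
    (w := fun N j => pr p N * ir p (N + j) * (pr p N * ir p (N + -j)))
    (fun j m => ((wt_dvd hX j m).and (wt_dvd hX (-j) m)).mono fun N h => dvd_mul_sub_one h.1 h.2)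
    (S := fun N => Finset.Icc (-N : ℤ) N) (fun N j hj => by
      rw [Finset.mem_Icc, not_and_or, not_le, not_le] at hj
      rcases hj with hj | hj
      · rw [ir_neg (m := N + j) (by omega)]; ring
      · rw [ir_neg (m := N + -j) (by omega)]; ring)
  have ha : Adm fun n => (1 + monomial (c + n * d) (δ * ε ^ n)) *
        (1 + monomial ((n + 1) * d - c) (ε ^ (n + 1) * δ)) := by
    refine (Adm.one_add fun n => monomial_dvd ?_ _).mul (Adm.one_add fun n => monomial_dvd ?_ _)
    · nlinarith
    · rw [Nat.add_mul, one_mul]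
      have : n * 1 ≤ n * d := Nat.mul_le_mul_left n (by omega)
      omega
  have hfin (N : ℕ) : pr p (2 * N) * ∑ j ∈ Finset.Icc (-N : ℤ) N,
      th c d δ ε j * (pr p N * ir p (N + j) * (pr p N * ir p (N + -j))) =
      pr p N ^ 2 * ∏ n ∈ Finset.range N, ((1 + monomial (c + n * d) (δ * ε ^ n)) *
        (1 + monomial ((n + 1) * d - c) (ε ^ (n + 1) * δ))) := by
    apply toL_inj
    have := jt_prod p0 x0 (toL_pow_ne_one hX) N
    rw [finsum_eq_sum_of_support_subset _ (jt_support _)] at this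
    simp only [map_mul, map_sum, toL_pr, toL_ir hX, map_prod, map_pow]
    have h1 : ∀ n : ℕ, toL ((1 + monomial (c + n * d) (δ * ε ^ n))) =
        1 + HahnSeries.single (c : ℤ) δ * toL p ^ n := by
      intro n
      rw [map_add, map_one, toL_monomial, iop, HahnSeries.single_pow, HahnSeries.single_mul_single]
      simp
    have h2 : ∀ n : ℕ, toL (1 + monomial ((n + 1) * d - c) (ε ^ (n + 1) * δ)) =
        1 + toL p ^ (n + 1) * (HahnSeries.single (c : ℤ) δ)⁻¹ := by
      intro n
      have : c ≤ (n + 1) * d := by nlinarith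
      rw [map_add, map_one, toL_monomial, iop, HahnSeries.single_pow, HahnSeries.inv_single,
        HahnSeries.single_mul_single, inv_eq_of_mul_eq_one_right hδ, Nat.cast_sub this]
      simp [sub_eq_add_neg]
    have h3 : ∀ j : ℤ, toL (th c d δ ε j) * (pf (toL p) N * ip (toL p) (N + j) *
        (pf (toL p) N * ip (toL p) (N + -j))) =
        pf (toL p) N ^ 2 * jt (toL p) (HahnSeries.single (c : ℤ) δ) N j := by
      intro j
      have : toL (th c d δ ε j) = HahnSeries.single (c : ℤ) δ ^ j * toL p ^ (j * (j - 1) / 2) := by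
        have := (abs_nonneg j).trans (te_ge hc hd j)
        rw [th, toL_monomial, iop, single_zpow', single_zpow', HahnSeries.single_mul_single,
          Int.toNat_of_nonneg this, te]
        congr 1
        ring_nf
      rw [this, jt, ← sub_eq_add_neg (N : ℤ)]
      ring
    simp only [h1, h2, h3]
    rw [← this, ← Finset.mul_sum]
    push_cast
    ring
  have hl := ((pr_tendsto hX).comp (tendsto_id.const_mul_atTop' (two_pos))).mul hT
  have hr := ((pr_tendsto hX).pow 2).mul ha.tendsto
  have := tendsto_nhds_unique hl (hr.congr fun N => (hfin N).symm)
  refine mul_left_cancel₀ (adm_pr hX).ne_zero (this.trans ?_)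
  ring

end

/-! ### The limit of the fermionic side -/

theorem finsum_eq_sum_comp {ι κ M : Type*} [AddCommMonoid M] {f : κ → M} {i : ι → κ}
    (hi : Function.Injective i) (S : Finset ι) (h : ∀ k, f k ≠ 0 → ∃ a ∈ S, i a = k) :
    ∑ᶠ k, f k = ∑ a ∈ S, f (i a) := by
  rw [finsum_eq_sum_of_support_subset (s := S.map ⟨i, hi⟩), Finset.sum_map]
  · rfl
  · intro k hk
    obtain ⟨a, ha, rfl⟩ := h k hk
    rw [Finset.mem_coe, Finset.mem_map]
    exact ⟨a, ha, rfl⟩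

theorem toL_X_ne : toL X ≠ 0 := by simp [HahnSeries.ofPowerSeries_X]

theorem ir_ne_zero_imp {p : ℚ⟦X⟧} {m : ℤ} (h : ir p m ≠ 0) : 0 ≤ m := by
  by_contra h2; exact h (ir_neg (not_le.mp h2))

/-- The exponent of the quadruple sum; the truncated subtraction is harmless. -/
def Qe (n : ℕ × ℕ × ℕ × ℕ) : ℕ :=
  n.1 ^ 2 + n.2.1 ^ 2 + n.2.2.1 ^ 2 + n.2.2.2 ^ 2 + n.2.1 * n.2.2.2 - n.1 * n.2.1

theorem Qe_cast (n : ℕ × ℕ × ℕ × ℕ) : (Qe n : ℤ) =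
    n.1 ^ 2 + n.2.1 ^ 2 + n.2.2.1 ^ 2 + n.2.2.2 ^ 2 + n.2.1 * n.2.2.2 - n.1 * n.2.1 := by
  have : n.1 * n.2.1 ≤ n.1 ^ 2 + n.2.1 ^ 2 + n.2.2.1 ^ 2 + n.2.2.2 ^ 2 + n.2.1 * n.2.2.2 := by
    rcases le_total n.1 n.2.1 with h | h <;> nlinarith
  rw [Qe, Nat.cast_sub this]
  push_cast
  ring

theorem Qe_tendsto : Tendsto Qe cofinite atTop := by
  refine tendsto_atTop.mpr fun m => ?_
  refine (Set.finite_Icc ((0, 0, 0, 0) : ℕ × ℕ × ℕ × ℕ) (2 * m, 2 * m, 2 * m, 2 * m)).subset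
    fun n hn => ?_
  have h := Qe_cast n
  simp only [Set.mem_compl_iff, Set.mem_ofPred_eq, not_le] at hn
  obtain ⟨a, b, c, d⟩ := n
  simp only at h
  have hm : (Qe (a, b, c, d) : ℤ) < m := by exact_mod_cast hn
  rw [h] at hm
  have key (x : ℕ) (hx : (x : ℤ) ^ 2 ≤ 2 * m) : x ≤ 2 * m := by
    have : (x : ℤ) ≤ x ^ 2 := by exact_mod_cast Nat.le_self_pow two_ne_zero x
    omega
  have hbd : (0 : ℤ) ≤ b * d := by positivity
  have ha := key a (by nlinarith [sq_nonneg ((a : ℤ) - b)])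
  have hb := key b (by nlinarith [sq_nonneg ((a : ℤ) - b)])
  have hc := key c (by nlinarith [sq_nonneg ((a : ℤ) - b)])
  have hd := key d (by nlinarith [sq_nonneg ((a : ℤ) - b)])
  simp only [Set.mem_Icc, Prod.le_def]
  omega

/-- Summand of the quadruple sum, with the Gaussian binomials written out. -/
noncomputable def fs (n : ℕ × ℕ × ℕ × ℕ) : ℚ⟦X⟧ :=
  X ^ Qe n * (pr X n.1 * (ir X (n.1 - n.2.1) * ir X (n.2.1 - n.2.2.1) * ir X n.2.2.1 *
    ir X (n.1 - n.2.2.2) * ir X n.2.2.2))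

theorem fs_dvd (n : ℕ × ℕ × ℕ × ℕ) : X ^ Qe n ∣ fs n := dvd_mul_right _ _

/-- The box of summation indices that are at most `N`. -/
def fbox (N : ℕ) : Finset (ℕ × ℕ × ℕ × ℕ) :=
  Finset.range (N + 1) ×ˢ Finset.range (N + 1) ×ˢ Finset.range (N + 1) ×ˢ Finset.range (N + 1)

theorem fs_limit :
    Tendsto (fun N : ℕ => ∑ n ∈ fbox N, fs n * (pr X N * ir X (N + -n.1))) atTop
      (𝓝 (∑' n, fs n)) := by
  refine tannery Qe_tendsto fs_dvd (fun n m => wt_dvd dvd_rfl _ m) fun N n hn => ?_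
  by_contra h
  simp only [fs, mul_eq_zero, not_or] at h
  obtain ⟨⟨-, -, ⟨⟨⟨h1, h2⟩, -⟩, h4⟩, -⟩, -, h6⟩ := h
  have := ir_ne_zero_imp h1
  have := ir_ne_zero_imp h2
  have := ir_ne_zero_imp h4
  have := ir_ne_zero_imp h6
  simp only [fbox, Finset.mem_product, Finset.mem_range] at hn
  omega

/-- The truncated quadruple sum is `(q;q)_N` times the fermionic sum of the profile `(2,2,1)`. -/
theorem toL_fs (N : ℕ) :
    toL (∑ n ∈ fbox N, fs n * (pr X N * ir X (N + -n.1))) =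
      pf (toL X) N * FF (toL X) (gg (toL X) 6) N := by
  have h1 : FF (toL X) (gg (toL X) 6) N =
      ∑ n ∈ Finset.range (N + 1), gg (toL X) 6 n * ip (toL X) (N - n) := by
    refine finsum_eq_sum_comp (i := Nat.cast) Nat.cast_injective _ fun k hk => ?_
    have h0 : 0 ≤ k := by
      by_contra h
      exact left_ne_zero_of_mul hk (gg_neg _ _ _ (not_le.mp h))
    have := ip_ne_zero_imp (right_ne_zero_of_mul hk)
    exact ⟨k.toNat, by rw [Finset.mem_range]; omega, by omega⟩
  have h2 (n : ℕ) (hn : n ∈ Finset.range (N + 1)) : vv (toL X) n n (0 - n) 0 0 =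
      ∑ m ∈ Finset.range (N + 1) ×ˢ Finset.range (N + 1) ×ˢ Finset.range (N + 1),
        su (toL X) n n (0 - n) 0 0 (m.1, m.2.1, m.2.2) := by
    refine finsum_eq_sum_comp (i := fun m : ℕ × ℕ × ℕ => ((m.1 : ℤ), (m.2.1 : ℤ), (m.2.2 : ℤ)))
      ?_ _ fun k hk => ?_
    · rintro ⟨a, b, c⟩ ⟨a', b', c'⟩ h
      simpa using h
    · have := su_support _ _ _ _ _ hk
      simp only [Finset.coe_Icc, Set.mem_Icc, Prod.le_def] at this
      refine ⟨(k.1.toNat, k.2.1.toNat, k.2.2.toNat), ?_, ?_⟩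
      · simp only [Finset.mem_product, Finset.mem_range] at hn ⊢
        omega
      · refine Prod.ext ?_ (Prod.ext ?_ ?_) <;> simp <;> omega
  rw [h1, Finset.mul_sum, map_sum, fbox, Finset.sum_product]
  refine Finset.sum_congr rfl fun n hn => ?_
  rw [show gg (toL X) 6 n = ss (toL X) 0 0 0 n from rfl, ss, h2 n hn, Finset.mul_sum, Finset.sum_mul,
    Finset.mul_sum]
  refine Finset.sum_congr rfl fun ⟨a, b, c⟩ _ => ?_
  have he : toL X ^ ((n : ℤ) ^ 2) *
      toL X ^ ((a : ℤ) ^ 2 + b ^ 2 + c ^ 2 + a * c + (0 - n) * a + 0 * b + 0 * c) =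
      toL X ^ Qe (n, a, b, c) := by
    rw [← zpow_natCast, Qe_cast, ← zpow_add₀ toL_X_ne]
    congr 1
    ring
  simp only [fs, su, map_mul, map_pow, toL_pr, toL_ir dvd_rfl, ← he, sub_eq_add_neg]
  ring

/-! ### The limit of the bosonic side -/

/-- The exponent `E(u) + s·x` of the bosonic side at `x = (3, 1, 0)`, that is, for the
profile `(2,2,1)`. -/
def BE (u : ℤ × ℤ) : ℤ := EE u.1 u.2 + u.1 * 3 + (u.2 - 1) * 1 + (1 - u.1 - u.2) * 0

theorem BE_ge (u : ℤ × ℤ) :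
    6 * u.1 ^ 2 + 2 * (2 * u.2 + u.1 - 3) ^ 2 + 3 * (2 * u.2 + u.1 - 3) - 1 ≤ 3 * BE u := by
  obtain ⟨u, v⟩ := u
  simp only [BE, EE]
  have h : 4 * (u ^ 2 + v ^ 2 + (3 - u - v) ^ 2 - 5) - 2 ≤
      3 * (4 * (u ^ 2 + v ^ 2 + (3 - u - v) ^ 2 - 5) / 3) := by omega
  nlinarith

theorem BE_nonneg (u : ℤ × ℤ) : 0 ≤ BE u := by
  have := BE_ge u
  generalize 2 * u.2 + u.1 - 3 = b at this
  have hb : -1 ≤ 2 * b ^ 2 + 3 * b := by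
    rcases lt_or_ge b 0 with h | h <;> nlinarith
  have := sq_nonneg u.1
  omega

/-- Summand of the limiting bosonic sum. -/
noncomputable def bs (u : ℤ × ℤ) : ℚ⟦X⟧ := C (chi ℚ (u.2 - u.1)) * X ^ (BE u).toNat

theorem bs_dvd (u : ℤ × ℤ) : X ^ (BE u).toNat ∣ bs u := dvd_mul_left _ _

theorem BE_tendsto : Tendsto (fun u => (BE u).toNat) cofinite atTop := by
  refine tendsto_atTop.mpr fun m => ?_
  refine (Set.finite_Icc ((-(10 * m + 20), -(10 * m + 20)) : ℤ × ℤ)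
    (10 * m + 20, 10 * m + 20)).subset fun u hu => ?_
  have h := BE_ge u
  simp only [Set.mem_compl_iff, Set.mem_ofPred_eq, not_le] at hu
  have hm : BE u < m := by omega
  obtain ⟨a, v⟩ := u
  simp only at h
  obtain ⟨b, hb⟩ : ∃ b, b = 2 * v + a - 3 := ⟨_, rfl⟩
  rw [← hb] at h
  have h1 : -(3 * (m : ℤ) + 4) ≤ b ∧ b ≤ 3 * m + 4 := by
    constructor <;> nlinarith [sq_nonneg a, sq_nonneg (b + 1), sq_nonneg (b - 1)]
  have h2 : -(3 * (m : ℤ) + 4) ≤ a ∧ a ≤ 3 * m + 4 := by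
    constructor <;> nlinarith [sq_nonneg (a + 1), sq_nonneg (b + 1), sq_nonneg (a - 1)]
  simp only [Set.mem_Icc, Prod.le_def]
  omega

/-- A box containing the support of the bosonic sum at level `N`. -/
noncomputable def bbox (N : ℕ) : Finset (ℤ × ℤ) :=
  Finset.Icc ((-(N : ℤ), 1 - (N : ℤ))) (2 * N, 2 * N + 1)

/-- Weight of the lattice point `u` at level `N`; it tends to `1` as `N → ∞`. -/
noncomputable def bw (N : ℕ) (u : ℤ × ℤ) : ℚ⟦X⟧ :=
  pr X N * ir X (N + u.1) * (pr X N * ir X (N + (u.2 - 1))) *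
    (pr X N * ir X (N + (1 - u.1 - u.2)))

theorem toL_bs (N : ℕ) (u : ℤ × ℤ) :
    toL (bs u * bw N u) = pf (toL X) N ^ 3 * bt (toL X) N 3 1 0 u := by
  have he : toL X ^ (BE u).toNat =
      toL X ^ (EE u.1 u.2 + u.1 * 3 + (u.2 - 1) * 1 + (1 - u.1 - u.2) * 0) := by
    rw [← zpow_natCast, Int.toNat_of_nonneg (BE_nonneg u), BE]
  have hc : toL (C (chi ℚ (u.2 - u.1))) = chi (LaurentSeries ℚ) (u.2 - u.1) := by
    simp only [chi]
    split_ifs <;> simp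
  simp only [bs, bw, bt, map_mul, map_pow, toL_pr, toL_ir dvd_rfl, he, hc]
  ring

theorem bs_limit : Tendsto (fun N : ℕ => ∑ u ∈ bbox N, bs u * bw N u) atTop
    (𝓝 (∑' u, bs u)) := by
  refine tannery BE_tendsto bs_dvd (fun u m => ?_) fun N u hu => ?_
  · filter_upwards [wt_dvd (p := X) dvd_rfl u.1 m, wt_dvd (p := X) dvd_rfl (u.2 - 1) m,
      wt_dvd (p := X) dvd_rfl (1 - u.1 - u.2) m] with N h1 h2 h3
    exact dvd_mul_sub_one (dvd_mul_sub_one h1 h2) h3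
  · apply toL_inj
    rw [toL_bs, map_zero]
    by_contra h
    exact hu (bt_support (q := toL X) N 3 1 0 (right_ne_zero_of_mul h))

theorem toL_bs_sum (N : ℕ) :
    toL (∑ u ∈ bbox N, bs u * bw N u) = pf (toL X) N ^ 3 * bb (toL X) 3 1 0 N := by
  rw [map_sum, bb, finsum_eq_sum_of_support_subset _ (bt_support (q := toL X) N 3 1 0),
    Finset.mul_sum]
  exact Finset.sum_congr rfl fun u _ => toL_bs N u

/-- Equality of the finite fermionic and bosonic sums for the profile `(2,2,1)`, by uniqueness of
the solution of the `q`-difference system. -/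
theorem ferm_eq_bos (N : ℕ) : FF (toL X) (gg (toL X) 6) N = bb (toL X) 3 1 0 N := by
  have : CharZero (LaurentSeries ℚ) :=
    charZero_of_injective_algebraMap (algebraMap ℚ (LaurentSeries ℚ)).injective
  refine Sol.unique (Valued.v (R := LaurentSeries ℚ)) ?_
    (sol_ferm toL_X_ne (toL_pow_ne_one dvd_rfl)) (sol_bos toL_X_ne (toL_pow_ne_one dvd_rfl)) N 6
  rw [HahnSeries.ofPowerSeries_X, LaurentSeries.valuation_single_zpow, ← WithZero.exp_zero,
    WithZero.exp_lt_exp]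
  norm_num

/-- The limit `N → ∞` of `ferm_eq_bos` after multiplication by `(q;q)_N ^ 3`. -/
theorem sum_eq : (∏' k, (1 - (X : ℚ⟦X⟧) ^ (k + 1))) ^ 2 * ∑' n, fs n = ∑' u, bs u := by
  refine tendsto_nhds_unique (((pr_tendsto dvd_rfl).pow 2).mul fs_limit)
    (bs_limit.congr fun N => toL_inj ?_)
  rw [toL_bs_sum, map_mul, toL_fs, map_pow, toL_pr, ferm_eq_bos]
  ring

/-! ### Theta function identities -/

section theta

theorem tendsto_add_prod {e₁ e₂ : ℤ → ℕ} (h₁ : Tendsto e₁ cofinite atTop)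
    (h₂ : Tendsto e₂ cofinite atTop) :
    Tendsto (fun p : ℤ × ℤ => e₁ p.1 + e₂ p.2) cofinite atTop := by
  refine tendsto_atTop.mpr fun m => ?_
  have f₁ := tendsto_atTop.mp h₁ m
  have f₂ := tendsto_atTop.mp h₂ m
  rw [eventually_cofinite] at f₁ f₂ ⊢
  refine (f₁.prod f₂).subset fun p hp => ?_
  simp only [Set.mem_prod, Set.mem_ofPred_eq] at hp ⊢
  omega

section

variable {c₁ d₁ c₂ d₂ : ℕ} (hc₁ : 0 < c₁) (hd₁ : c₁ < d₁) (hc₂ : 0 < c₂) (hd₂ : c₂ < d₂)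
  (δ₁ ε₁ δ₂ ε₂ : ℚ)
include hc₁ hd₁ hc₂ hd₂

theorem th_mul_summable : Summable fun p : ℤ × ℤ => th c₁ d₁ δ₁ ε₁ p.1 * th c₂ d₂ δ₂ ε₂ p.2 :=
  summable_of_dvd (tendsto_add_prod (te_tendsto hc₁ hd₁) (te_tendsto hc₂ hd₂)) fun p => by
    rw [pow_add]
    exact mul_dvd_mul (monomial_dvd le_rfl _) (monomial_dvd le_rfl _)

theorem th_mul : (∑' j, th c₁ d₁ δ₁ ε₁ j) * ∑' j, th c₂ d₂ δ₂ ε₂ j =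
    ∑' p : ℤ × ℤ, th c₁ d₁ δ₁ ε₁ p.1 * th c₂ d₂ δ₂ ε₂ p.2 :=
  (th_summable hc₁ hd₁ δ₁ ε₁).tsum_mul_tsum (th_summable hc₂ hd₂ δ₂ ε₂)
    (th_mul_summable hc₁ hd₁ hc₂ hd₂ ..)

theorem th_mul_th (i j : ℤ) : th c₁ d₁ δ₁ ε₁ i * th c₂ d₂ δ₂ ε₂ j =
    monomial (te c₁ d₁ i + te c₂ d₂ j).toNat
      (δ₁ ^ i * ε₁ ^ (i * (i - 1) / 2) * (δ₂ ^ j * ε₂ ^ (j * (j - 1) / 2))) := by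
  have h₁ := (abs_nonneg i).trans (te_ge hc₁ hd₁ i)
  have h₂ := (abs_nonneg j).trans (te_ge hc₂ hd₂ j)
  rw [th, th, monomial_mul_monomial, Int.toNat_add h₁ h₂]

end

theorem te_eq {c d : ℕ} {j t : ℤ} (h : 2 * t = 2 * (c * j) + d * (j * (j - 1))) :
    te c d j = t := by
  have := two_tri j
  refine mul_left_cancel₀ (two_ne_zero (α := ℤ)) ?_
  rw [te]
  linear_combination (d : ℤ) * this - h

theorem neg_one_zpow_two (x y : ℤ) : (-1 : ℚ) ^ (2 * x + y) = (-1) ^ y := by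
  rw [zpow_add₀ (by norm_num), zpow_mul]; norm_num

/-- The terms with `u₁ - u₀` congruent to `1` modulo `3`, in coordinates that diagonalize the
exponent; `bs_two` treats the residue `2`. -/
theorem bs_one (a r : ℤ) : bs (a, a + 3 * r + 1) =
    monomial (6 * (a + 2 * r) ^ 2 - (a + 2 * r) + 2 * a ^ 2).toNat 1 := by
  have hc : chi ℚ (a + 3 * r + 1 - a) = 1 := by
    rw [chi, if_pos (by omega)]
  have hB : BE (a, a + 3 * r + 1) = 6 * (a + 2 * r) ^ 2 - (a + 2 * r) + 2 * a ^ 2 := by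
    rw [BE, EE]
    simp only
    rw [Int.ediv_eq_of_eq_mul_right (c := 8 * a ^ 2 + 24 * a * r + 24 * r ^ 2 - 8 * a - 8 * r)
      (by norm_num) (by ring)]
    ring
  rw [bs, hB, hc, map_one, one_mul, X_pow_eq]

theorem bs_two (a r : ℤ) : bs (a, a + 3 * r + 2) =
    monomial (6 * (a + 2 * r) ^ 2 + 7 * (a + 2 * r) + 2 + 2 * a ^ 2).toNat (-1) := by
  have hc : chi ℚ (a + 3 * r + 2 - a) = -1 := by
    rw [chi, if_neg (by omega), if_pos (by omega)]
  have hB : BE (a, a + 3 * r + 2) =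
      6 * (a + 2 * r) ^ 2 + 7 * (a + 2 * r) + 2 + 2 * a ^ 2 := by
    rw [BE, EE]
    simp only
    rw [Int.ediv_eq_of_eq_mul_right (c := 8 * a ^ 2 + 24 * a * r + 24 * r ^ 2 + 8 * r)
      (by norm_num) (by ring)]
    ring
  rw [bs, hB, hc, map_neg, map_one, neg_one_mul, X_pow_eq, map_neg]

/-- Summand of `P(q) φ(q²) + P(-q) φ(-q²)`, where `P(q) = ∑ₖ (-1)ᵏ q ^ (k (3 k - 1) / 2)` and
`φ(q) = ∑ₐ q ^ (a²)`. -/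
noncomputable def pf2 (p : ℤ × ℤ) : ℚ⟦X⟧ := th 1 3 (-1) 1 p.1 * th 2 4 1 1 p.2 +
    th 1 3 1 (-1) p.1 * th 2 4 (-1) 1 p.2

theorem pf2_eq (k a : ℤ) : pf2 (k, a) = monomial (te 1 3 k + te 2 4 a).toNat
      ((-1) ^ k + (-1) ^ (k * (k - 1) / 2 + a)) := by
  rw [pf2, th_mul_th (by norm_num) (by norm_num) (by norm_num) (by norm_num),
    th_mul_th (by norm_num) (by norm_num) (by norm_num) (by norm_num), ← map_add]
  simp [zpow_add₀]

theorem te_two (a : ℤ) : te 2 4 a = 2 * a ^ 2 := te_eq (by push_cast; ring)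

theorem pf2_even (m a : ℤ) : pf2 (2 * m, a) =
    monomial (6 * m ^ 2 - m + 2 * a ^ 2).toNat (1 + (-1) ^ (m + a)) := by
  have tri : 2 * m * (2 * m - 1) / 2 = 2 * (m * m) - m :=
    Int.ediv_eq_of_eq_mul_right (by norm_num) (by ring)
  have h : te 1 3 (2 * m) = 6 * m ^ 2 - m := te_eq (by push_cast; ring)
  rw [pf2_eq, te_two, h, tri, show 2 * (m * m) - m + a = 2 * (m * m - m) + (m + a) by ring,
    neg_one_zpow_two, ← add_zero (2 * m), neg_one_zpow_two, zpow_zero]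

theorem pf2_odd (m a : ℤ) : pf2 (-(2 * m + 1), a) =
    monomial (6 * m ^ 2 + 7 * m + 2 + 2 * a ^ 2).toNat (-(1 + (-1) ^ (m + a))) := by
  have tri : (-(2 * m + 1)) * (-(2 * m + 1) - 1) / 2 = 2 * (m * m + m) + m + 1 :=
    Int.ediv_eq_of_eq_mul_right (by norm_num) (by ring)
  have h : te 1 3 (-(2 * m + 1)) = 6 * m ^ 2 + 7 * m + 2 := te_eq (by push_cast; ring)
  rw [pf2_eq, te_two, h, tri, show 2 * (m * m + m) + m + 1 + a =
    2 * (m * m + m) + (m + a + 1) by ring, neg_one_zpow_two,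
    show -(2 * m + 1) = 2 * (-m - 1) + 1 by ring, neg_one_zpow_two, zpow_one,
    zpow_add₀ (by norm_num), zpow_one]
  congr 1
  ring

/-- `P(q) φ(q²) + P(-q) φ(-q²)` is twice the bosonic sum. Both sums run over the same two copies of
the lattice: residues `1` and `2` of `u₁ - u₀` modulo `3` on the bosonic side correspond to even and
odd `k` in `pf2`, where the terms of the wrong parity cancel and the other ones double. -/
theorem two_theta : (∑' k, th 1 3 (-1) 1 k) * (∑' v, th 2 4 1 1 v) +
    (∑' k, th 1 3 1 (-1) k) * (∑' v, th 2 4 (-1) 1 v) = 2 * ∑' u, bs u := by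
  have n1 : (0 : ℕ) < 1 := by norm_num
  have n2 : 1 < 3 := by norm_num
  have n3 : (0 : ℕ) < 2 := by norm_num
  have n4 : 2 < 4 := by norm_num
  rw [th_mul n1 n2 n3 n4, th_mul n1 n2 n3 n4,
    ← (th_mul_summable n1 n2 n3 n4 ..).tsum_add (th_mul_summable n1 n2 n3 n4 ..)]
  change ∑' p, pf2 p = _
  let i : (ℤ × ℤ) ⊕ (ℤ × ℤ) → ℤ × ℤ :=
    Sum.elim (fun p => (p.1, p.1 + 3 * p.2 + 1)) fun p => (p.1, p.1 + 3 * p.2 + 2)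
  let j : (ℤ × ℤ) ⊕ (ℤ × ℤ) → ℤ × ℤ :=
    Sum.elim (fun p => (2 * (p.1 + 2 * p.2), p.1)) fun p => (-(2 * (p.1 + 2 * p.2) + 1), p.1)
  have hi : Function.Injective i := by
    rintro (⟨a, r⟩ | ⟨a, r⟩) (⟨a', r'⟩ | ⟨a', r'⟩) h <;>
      simp only [i, Sum.elim_inl, Sum.elim_inr, Prod.mk.injEq, Sum.inl.injEq, Sum.inr.injEq,
        reduceCtorEq] at h ⊢ <;> omega
  have hj : Function.Injective j := by
    rintro (⟨a, r⟩ | ⟨a, r⟩) (⟨a', r'⟩ | ⟨a', r'⟩) h <;>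
      simp only [j, Sum.elim_inl, Sum.elim_inr, Prod.mk.injEq, Sum.inl.injEq, Sum.inr.injEq,
        reduceCtorEq] at h ⊢ <;> omega
  have hi' : Function.support bs ⊆ Set.range i := by
    rintro ⟨a, v⟩ h
    rcases (by omega : (v - a) % 3 = 0 ∨ (v - a) % 3 = 1 ∨ (v - a) % 3 = 2) with h' | h' | h'
    · exact absurd (by simp [bs, chi, h']) h
    · exact ⟨.inl (a, (v - a) / 3), Prod.ext rfl (by simp only [i, Sum.elim_inl]; omega)⟩
    · exact ⟨.inr (a, (v - a) / 3), Prod.ext rfl (by simp only [i, Sum.elim_inr]; omega)⟩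
  have hj' : Function.support pf2 ⊆ Set.range j := by
    rintro ⟨k, a⟩ h
    have vanish (m : ℤ) (hm : (m + a) % 2 = 1) : (-1 : ℚ) ^ (m + a) = -1 := by
      rw [show m + a = 2 * ((m + a) / 2) + 1 by omega, neg_one_zpow_two, zpow_one]
    obtain ⟨m, rfl | rfl⟩ := Int.even_or_odd' k
    · by_cases hm : (m + a) % 2 = 1
      · exact absurd (by rw [pf2_even, vanish m hm, add_neg_cancel, map_zero]) h
      · exact ⟨.inl (a, (m - a) / 2), Prod.ext (by simp only [j, Sum.elim_inl]; omega) rfl⟩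
    · by_cases hm : ((-m - 1) + a) % 2 = 1
      · refine absurd ?_ h
        rw [show 2 * m + 1 = -(2 * (-m - 1) + 1) by ring, pf2_odd, vanish _ hm, add_neg_cancel,
          neg_zero, map_zero]
      · exact ⟨.inr (a, (-m - 1 - a) / 2), Prod.ext (by simp only [j, Sum.elim_inr]; omega) rfl⟩
  have hpow (a r : ℤ) : (-1 : ℚ) ^ (a + 2 * r + a) = 1 := by
    rw [show a + 2 * r + a = 2 * (a + r) + 0 by ring, neg_one_zpow_two, zpow_zero]
  rw [← hi.tsum_eq hi', ← hj.tsum_eq hj', two_mul]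
  have hs : Summable fun x => bs (i x) := by
    refine summable_of_dvd (BE_tendsto.comp hi.tendsto_cofinite) fun x => bs_dvd (i x)
  rw [← hs.tsum_add hs]
  refine tsum_congr ?_
  rintro (⟨a, r⟩ | ⟨a, r⟩)
  · simp only [i, j, Sum.elim_inl]
    rw [pf2_even, bs_one, hpow, ← map_add]
  · simp only [i, j, Sum.elim_inr]
    rw [pf2_odd, bs_two, hpow, ← map_add, neg_add]

/-- `ψ(-q) φ(q²) + ψ(q) φ(-q²) = 2 f²`, where `ψ(q) = ∑ₖ q ^ (2 k² - k)`, `φ(q) = ∑ₐ q ^ (a²)` and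
`f = ∑ₐ (-1)ᵃ q ^ (4 a² - a)`, by the rotation `(a, b) ↦ (a + b, a - b)` of the lattice. -/
theorem rotate : (∑' k, th 1 4 (-1) 1 k) * (∑' v, th 2 4 1 1 v) +
    (∑' k, th 1 4 1 1 k) * (∑' v, th 2 4 (-1) 1 v) = 2 * (∑' a, th 3 8 (-1) 1 a) ^ 2 := by
  have n1 : (0 : ℕ) < 1 := by norm_num
  have n2 : 1 < 4 := by norm_num
  have n3 : (0 : ℕ) < 2 := by norm_num
  have n4 : 2 < 4 := by norm_num
  have n5 : (0 : ℕ) < 3 := by norm_num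
  have n6 : 3 < 8 := by norm_num
  rw [sq, th_mul n1 n2 n3 n4, th_mul n1 n2 n3 n4, th_mul n5 n6 n5 n6,
    ← (th_mul_summable n1 n2 n3 n4 ..).tsum_add (th_mul_summable n1 n2 n3 n4 ..)]
  set g : ℤ × ℤ → ℚ⟦X⟧ := fun p => th 1 4 (-1) 1 p.1 * th 2 4 1 1 p.2 +
    th 1 4 1 1 p.1 * th 2 4 (-1) 1 p.2 with hg
  have gval (k a : ℤ) : g (k, a) = monomial (te 1 4 k + te 2 4 a).toNat ((-1) ^ k + (-1) ^ a) := by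
    simp only [hg]
    rw [th_mul_th n1 n2 n3 n4, th_mul_th n1 n2 n3 n4, ← map_add]
    simp
  let i : ℤ × ℤ → ℤ × ℤ := fun p => (p.1 + p.2, p.1 - p.2)
  have hi : Function.Injective i := by
    rintro ⟨a, b⟩ ⟨a', b'⟩ h
    simp only [i, Prod.mk.injEq] at h ⊢
    omega
  have hi' : Function.support g ⊆ Set.range i := by
    rintro ⟨k, a⟩ h
    by_cases hp : (k + a) % 2 = 0
    · exact ⟨((k + a) / 2, (k - a) / 2), by simp only [i, Prod.mk.injEq]; omega⟩
    · refine absurd ?_ h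
      rw [gval]
      rcases Int.even_or_odd k with hk | hk <;> rcases Int.even_or_odd a with ha | ha
      · exact absurd (Int.even_iff.mp (hk.add ha)) hp
      · simp [hk.neg_one_zpow, ha.neg_one_zpow]
      · simp [hk.neg_one_zpow, ha.neg_one_zpow]
      · exact absurd (Int.even_iff.mp (hk.add_odd ha)) hp
  rw [← hi.tsum_eq hi', ← (th_mul_summable n5 n6 n5 n6 ..).tsum_mul_left]
  refine tsum_congr fun ⟨a, b⟩ => ?_
  simp only [i]
  rw [gval, th_mul_th n5 n6 n5 n6, two_mul, ← map_add]
  have h : (-1 : ℚ) ^ (a + b) = (-1) ^ (a - b) := by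
    rw [show a + b = 2 * b + (a - b) by ring, neg_one_zpow_two]
  have e1 (x : ℤ) : te 1 4 x = 2 * x ^ 2 - x := te_eq (by push_cast; ring)
  have e2 (x : ℤ) : te 3 8 x = 4 * x ^ 2 - x := te_eq (by push_cast; ring)
  rw [← h, te_two, e1, e2, e2, zpow_add₀ (by norm_num)]
  simp only [one_zpow, mul_one]
  congr 2
  ring_nf

end theta

/-! ### Product evaluations and conclusion -/

section euler

/-- The factor `1 + r X ^ n`. -/
noncomputable def fa (n : ℕ) (r : ℚ) : ℚ⟦X⟧ := 1 + monomial n r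

theorem adm_fa {e : ℕ → ℕ} (he : ∀ k, k + 1 ≤ e k) (r : ℕ → ℚ) : Adm fun k => fa (e k) (r k) :=
  Adm.one_add fun k => monomial_dvd (he k) _

theorem fa_congr {m n : ℕ} {r s : ℚ} (h : m = n) (h' : r = s) : fa m r = fa n s := by
  rw [h, h']

theorem one_sub_X_pow (n : ℕ) : 1 - X ^ n = fa n (-1) := by
  rw [fa, map_neg, X_pow_eq, sub_eq_add_neg]

theorem Adm.block {a : ℕ → ℚ⟦X⟧} (ha : Adm a) {d : ℕ} (hd : 0 < d) :
    Adm fun k => ∏ j ∈ Finset.range d, a (d * k + j) := fun k =>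
  Finset.prod_induction _ (fun x => X ^ (k + 1) ∣ x - 1) (fun _ _ => dvd_mul_sub_one) (by simp)
    fun j _ => (pow_dvd_pow _ (by nlinarith)).trans (ha _)

/-- The Jacobi triple product with all three families of factors in one infinite product. -/
theorem jtp' {c d : ℕ} (hc : 0 < c) (hd : c < d) {δ ε : ℚ} (hδ : δ * δ = 1) (hε : ε * ε = 1) :
    ∑' j, th c d δ ε j = ∏' k, (fa (d * (k + 1)) (-ε ^ (k + 1)) *
      (fa (c + k * d) (δ * ε ^ k) * fa ((k + 1) * d - c) (ε ^ (k + 1) * δ))) := by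
  have h (k : ℕ) : 1 - monomial d ε ^ (k + 1) = fa (d * (k + 1)) (-ε ^ (k + 1)) := by
    rw [fa, monomial_pow, map_neg, sub_eq_add_neg, mul_comm d]
  rw [jtp hc hd hδ hε, ← Adm.tprod_mul]
  · exact tprod_congr fun k => by rw [h]; rfl
  · simp only [h]
    exact adm_fa (fun k => by nlinarith) _
  · refine (adm_fa (fun k => by nlinarith) _).mul (adm_fa (fun k => ?_) _)
    have : k * 1 ≤ k * d := Nat.mul_le_mul_left k (by omega)
    rw [Nat.add_mul, one_mul]
    omega

/-- The product `(q²;q⁴)_∞`, over the residue `2` modulo `4`. -/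
noncomputable def E4 : ℚ⟦X⟧ := ∏' k : ℕ, fa (4 * k + 2) (-1)

section

variable {σ : ℚ} (hσ : σ * σ = 1)
include hσ

theorem sg_pow (n m : ℕ) : σ ^ (2 * n + m) = σ ^ m := by
  rw [pow_add, pow_mul, sq, hσ, one_pow, one_mul]

/-- Euler's pentagonal number theorem for `(y;y)_∞` with `y = ±X`. -/
theorem pent : ∑' j, th 1 3 (-σ) σ j = ∏' k, fa (k + 1) (-σ ^ (k + 1)) := by
  have ha : Adm fun k => fa (k + 1) (-σ ^ (k + 1)) := adm_fa (fun k => le_rfl) _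
  rw [jtp' (by norm_num) (by norm_num) (by rw [neg_mul_neg, hσ]) hσ,
    ← ha.tprod_block (d := 3) (by norm_num) (ha.block (by norm_num))]
  refine tprod_congr fun k => ?_
  simp only [Finset.prod_range_succ, Finset.prod_range_zero, one_mul]
  have h1 : fa (3 * k + 0 + 1) (-σ ^ (3 * k + 0 + 1)) = fa (1 + k * 3) (-σ * σ ^ k) :=
    fa_congr (by ring) (by
      rw [show 3 * k + 0 + 1 = 2 * k + (k + 1) by ring, sg_pow hσ]; ring)
  have h2 : fa (3 * k + 1 + 1) (-σ ^ (3 * k + 1 + 1)) = fa ((k + 1) * 3 - 1) (σ ^ (k + 1) * -σ) :=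
    fa_congr (by omega) (by
      rw [show 3 * k + 1 + 1 = 2 * k + (k + 2) by ring, sg_pow hσ]; ring)
  have h3 : fa (3 * k + 2 + 1) (-σ ^ (3 * k + 2 + 1)) = fa (3 * (k + 1)) (-σ ^ (k + 1)) :=
    fa_congr (by omega) (by
      rw [show 3 * k + 2 + 1 = 2 * (k + 1) + (k + 1) by ring, sg_pow hσ])
  rw [h1, h2, h3]
  ring

/-- `(y;y)_∞` for `y = σ X`: the factors outside the residue `2` modulo `4` form a triple
product. -/
theorem even_part : ∏' k, fa (k + 1) (-σ ^ (k + 1)) = E4 * ∑' j, th 1 4 (-σ) 1 j := by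
  have ha : Adm fun k => fa (k + 1) (-σ ^ (k + 1)) := adm_fa (fun k => le_rfl) _
  rw [jtp' (by norm_num) (by norm_num) (by rw [neg_mul_neg, hσ]) (one_mul 1), E4,
    ← ha.tprod_block (d := 4) (by norm_num) (ha.block (by norm_num)), ← Adm.tprod_mul]
  · refine tprod_congr fun k => ?_
    simp only [Finset.prod_range_succ, Finset.prod_range_zero, one_mul]
    have h1 : fa (4 * k + 0 + 1) (-σ ^ (4 * k + 0 + 1)) = fa (1 + k * 4) (-σ * 1 ^ k) :=
      fa_congr (by ring) (by
        rw [show 4 * k + 0 + 1 = 2 * (2 * k) + 1 by ring, sg_pow hσ]; ring)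
    have h2 : fa (4 * k + 1 + 1) (-σ ^ (4 * k + 1 + 1)) = fa (4 * k + 2) (-1) :=
      fa_congr (by omega) (by
        rw [show 4 * k + 1 + 1 = 2 * (2 * k + 1) + 0 by ring, sg_pow hσ, pow_zero])
    have h3 : fa (4 * k + 2 + 1) (-σ ^ (4 * k + 2 + 1)) = fa ((k + 1) * 4 - 1) (1 ^ (k + 1) * -σ) :=
      fa_congr (by omega) (by
        rw [show 4 * k + 2 + 1 = 2 * (2 * k + 1) + 1 by ring, sg_pow hσ]; ring)
    have h4 : fa (4 * k + 3 + 1) (-σ ^ (4 * k + 3 + 1)) = fa (4 * (k + 1)) (-1 ^ (k + 1)) :=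
      fa_congr (by omega) (by
        rw [show 4 * k + 3 + 1 = 2 * (2 * k + 2) + 0 by ring, sg_pow hσ]; ring)
    rw [h1, h2, h3, h4]
    ring
  · exact adm_fa (fun k => by omega) _
  · exact (adm_fa (fun k => by omega) _).mul
      ((adm_fa (fun k => by omega) _).mul (adm_fa (fun k => by omega) _))

end

/-- The limiting bosonic sum as a product: `P(±q) = (q²;q⁴)_∞ ψ(∓q)` turns `two_theta` into
`rotate`. -/
theorem bs_prod : ∑' u, bs u = E4 * (∑' a, th 3 8 (-1) 1 a) ^ 2 := by
  have n1 : (-1 : ℚ) * -1 = 1 := by norm_num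
  have h1 := (pent (one_mul 1)).trans (even_part (one_mul (1 : ℚ)))
  have h2 := (pent (n1)).trans (even_part n1)
  rw [neg_neg] at h2
  have h := two_theta
  rw [h1, h2] at h
  refine mul_left_cancel₀ (a := (2 : ℚ⟦X⟧)) (fun h' => ?_) ?_
  · have := congrArg PowerSeries.constantCoeff h'
    rw [map_ofNat, map_zero] at this
    exact two_ne_zero this
  · rw [← h]
    linear_combination E4 * rotate

/-- Factor of the product side of the identity, before inversion. -/
noncomputable def dd (k : ℕ) : ℚ⟦X⟧ := (1 - X ^ (8 * k + 1)) ^ 2 * (1 - X ^ (8 * k + 2)) *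
  (1 - X ^ (8 * k + 4)) ^ 2 * (1 - X ^ (8 * k + 6)) * (1 - X ^ (8 * k + 7)) ^ 2

theorem adm_dd : Adm dd := by
  have h (j : ℕ) (hj : 0 < j) : Adm fun k => 1 - (X : ℚ⟦X⟧) ^ (8 * k + j) :=
    Adm.one_sub fun k => pow_dvd_pow _ (by omega)
  exact (((((h 1 (by omega)).pow 2).mul (h 2 (by omega))).mul ((h 4 (by omega)).pow 2)).mul
    (h 6 (by omega))).mul ((h 7 (by omega)).pow 2)

/-- Each block of eight consecutive factors of `(q;q)_∞ ^ 2` is regrouped by residues modulo `8`. -/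
theorem dd_mul : (∏' k, dd k) * (E4 * (∑' a, th 3 8 (-1) 1 a) ^ 2) =
    (∏' k, (1 - (X : ℚ⟦X⟧) ^ (k + 1))) ^ 2 := by
  have n1 : (-1 : ℚ) * -1 = 1 := by norm_num
  have ha : Adm fun k => 1 - (X : ℚ⟦X⟧) ^ (k + 1) := adm_pr dvd_rfl
  have he : Adm fun k => fa (4 * k + 2) (-1) := adm_fa (fun k => by omega) _
  have hf : Adm fun k => fa (8 * (k + 1)) (-1 ^ (k + 1)) *
      (fa (3 + k * 8) (-1 * 1 ^ k) * fa ((k + 1) * 8 - 3) (1 ^ (k + 1) * -1)) :=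
    (adm_fa (fun k => by omega) _).mul
      ((adm_fa (fun k => by omega) _).mul (adm_fa (fun k => by omega) _))
  rw [jtp' (by norm_num) (by norm_num) n1 (one_mul 1), E4,
    ← he.tprod_block (d := 2) (by norm_num) (he.block (by norm_num)), sq, sq,
    ← hf.tprod_mul hf, ← (he.block (by norm_num)).tprod_mul (hf.mul hf),
    ← adm_dd.tprod_mul ((he.block (by norm_num)).mul (hf.mul hf)),
    ← ha.tprod_block (d := 8) (by norm_num) (ha.block (by norm_num)),
    ← (ha.block (by norm_num)).tprod_mul (ha.block (by norm_num))]
  refine tprod_congr fun k => ?_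
  simp only [Finset.prod_range_succ, Finset.prod_range_zero, one_mul, dd, one_sub_X_pow, one_pow,
    mul_one]
  rw [show 4 * (2 * k + 0) + 2 = 8 * k + 2 by ring, show 4 * (2 * k + 1) + 2 = 8 * k + 6 by ring,
    show 8 * (k + 1) = 8 * k + 8 by ring, show (k + 1) * 8 - 3 = 8 * k + 5 by omega,
    show 3 + k * 8 = 8 * k + 3 by ring]
  simp only [add_assoc, Nat.reduceAdd]
  ring

theorem fs_tsum : ∑' n, fs n = (∏' k, dd k)⁻¹ := by
  have h := sum_eq
  rw [bs_prod] at h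
  have hP := (adm_pr (p := X) dvd_rfl).ne_zero
  have h1 : (∑' n, fs n) * ∏' k, dd k = 1 := by
    refine mul_left_cancel₀ (pow_ne_zero 2 hP) ?_
    rw [← mul_assoc, h, mul_one, ← dd_mul, mul_comm]
  refine (PowerSeries.eq_inv_iff_mul_eq_one ?_).mpr h1
  rw [adm_dd.constantCoeff]
  exact one_ne_zero

theorem qBinom_eq (m k : ℕ) : qBinom m k = pr X m * (ir X k * ir X (m - k)) := by
  rw [qBinom]
  split_ifs with h
  · rw [ir, ir, if_pos (by omega), if_pos (by omega), PowerSeries.mul_inv_rev,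
      show ((m : ℤ) - k).toNat = m - k by omega, Int.toNat_natCast, mul_comm (pr X k)⁻¹]
    rfl
  · rw [ir_neg (m := m - k) (by omega)]; ring

theorem summand_eq (a b c d : ℕ) :
    q ^ (a ^ 2 + b ^ 2 + c ^ 2 + d ^ 2 + 0 + b * d - a * b) * 1 * (qPoch a)⁻¹ * qBinom a b *
      qBinom a d * qBinom b c = fs (a, b, c, d) := by
  have h1 : (qPoch a)⁻¹ = ir X a := by rw [ir, if_pos (by omega)]; rfl
  have h2 : pr X a * ir X a = 1 := pr_mul_ir dvd_rfl
  have h3 : pr X b * ir X b = 1 := pr_mul_ir dvd_rfl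
  rw [fs, qBinom_eq, qBinom_eq, qBinom_eq, h1, q, Qe]
  simp only [add_zero]
  linear_combination (X ^ (a ^ 2 + b ^ 2 + c ^ 2 + d ^ 2 + b * d - a * b) * pr X a * ir X (a - b) *
    ir X d * ir X (a - d) * ir X c * ir X (b - c)) * (pr X b * ir X b * h2 + h3)

end euler

end A2Mod8

/-- Fourth new modulus-8 A₂ Rogers–Ramanujan identity (profile (2,2,1)). -/
theorem a2_mod8_profile221 :
    ∑' n : ℕ × ℕ × ℕ × ℕ,
      (fun n₁ n₂ n₃ n₄ : ℕ =>
        q ^ (n₁ ^ 2 + n₂ ^ 2 + n₃ ^ 2 + n₄ ^ 2 + (0) + n₂ * n₄ - n₁ * n₂)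
          * (1) * (qPoch n₁)⁻¹ * qBinom n₁ n₂ * qBinom n₁ n₄ * qBinom n₂ n₃)
      n.1 n.2.1 n.2.2.1 n.2.2.2
      = (∏' k : ℕ, ((1 - q ^ (8*k+1))^2 * (1 - q ^ (8*k+2)) * (1 - q ^ (8*k+4))^2 * (1 - q ^ (8*k+6)) * (1 - q ^ (8*k+7))^2))⁻¹ := by
  refine (tsum_congr fun n => ?_).trans (A2Mod8.fs_tsum.trans ?_)
  · exact A2Mod8.summand_eq n.1 n.2.1 n.2.2.1 n.2.2.2
  · simp only [A2Mod8.dd, q]
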